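/- arXiv:2511.19138 — 3 statements merged into one kernel-verified Lean document; each statement's English description precedes it below -/
import Mathlib

section
/- Let G be a gonality-tight graph with a vertex v such that removing v leaves the disjoint union of two (possibly disconnected or empty) subgraphs G' and G''. Suppose that for some integer k ≥ 1 the divisor D_2 = (k+1)·v + Σ_{w∈V(G')} w is v-reduced and realises the second gonality of G. Let N_{G'}(v) denote the set of neighbours of v in G'. Then: (1) there are exactly k+1 edges between v and each vertex of N_{G'}(v); (2) there is precisely one edge between every pair of distinct vertices of N_{G'}(v); (3) if V(G') ∖ N_{G'}(v) is nonempty, there is a unique vertex u ∈ N_{G'}(v) such that every path from a vertex of V(G') ∖ N_{G'}(v) to v passes through u; (4) setting n = |N_{G'}(v)|, the u-reduced divisor linearly equivalent to D_2 is (k+n+1)·u + Σ_{w∈V(G')∖N_{G'}(v)} w. -/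
open Finset

variable {V : Type*} [Fintype V] [DecidableEq V]

/-- A finite loopless multigraph on vertex type `V`, given by symmetric edge multiplicities. -/
structure Multigraph (V : Type*) [Fintype V] [DecidableEq V] where
  mult : V → V → ℕ
  symm : ∀ u v, mult u v = mult v u
  loopless : ∀ v, mult v v = 0

namespace Multigraph

def Adj (G : Multigraph V) (u v : V) : Prop := 0 < G.mult u v

/-- A graph is connected. -/
def Connected (G : Multigraph V) : Prop :=
  Nonempty V ∧ ∀ u v : V, Relation.ReflTransGen G.Adj u v

/-- Valence of a vertex. -/
def valence (G : Multigraph V) (v : V) : ℕ := ∑ u, G.mult v u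

/-- The Laplacian applied to an integer-valued function on the vertices. -/
def laplacian (G : Multigraph V) (f : V → ℤ) : V → ℤ :=
  fun w => ∑ u, (G.mult w u : ℤ) * (f w - f u)

/-- Degree of a divisor. -/
def degree (D : V → ℤ) : ℤ := ∑ v, D v

/-- A divisor is effective if all coefficients are nonnegative. -/
def Effective (D : V → ℤ) : Prop := ∀ v, 0 ≤ D v

/-- Linear equivalence of divisors: they differ by a sequence of chip-firing moves,
equivalently by a Laplacian of an integer function. -/
def LinEquiv (G : Multigraph V) (D D' : V → ℤ) : Prop :=
  ∃ f : V → ℤ, D' = D - G.laplacian f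

/-- A divisor is winnable if it is linearly equivalent to an effective divisor. -/
def Winnable (G : Multigraph V) (D : V → ℤ) : Prop :=
  ∃ E : V → ℤ, Effective E ∧ G.LinEquiv D E

/-- The Baker–Norine rank of a divisor: the largest `r` such that `D - E` is winnable for
every effective divisor `E` of degree `r` (the defining set contains all negative integers,
and its supremum is `-1` precisely when `D` itself is not winnable). -/
noncomputable def rank (G : Multigraph V) (D : V → ℤ) : ℤ :=
  sSup {r : ℤ | ∀ E : V → ℤ, Effective E → degree E = r → G.Winnable (fun w => D w - E w)}

/-- The `k`-th gonality of a graph: the smallest degree of a divisor of rank `k`. -/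
noncomputable def gonality (G : Multigraph V) (k : ℤ) : ℤ :=
  sInf {d : ℤ | ∃ D : V → ℤ, G.rank D = k ∧ degree D = d}

/-- A graph is gonality-tight if its second gonality exceeds its first by exactly 1. -/
def GonalityTight (G : Multigraph V) : Prop :=
  G.gonality 2 = G.gonality 1 + 1

/-- A divisor realises the `k`-th gonality if it has rank `k` and degree `gon_k(G)`. -/
def Realises (G : Multigraph V) (k : ℤ) (D : V → ℤ) : Prop :=
  G.rank D = k ∧ degree D = G.gonality k

/-- A divisor is `v`-reduced: nonnegative away from `v`, and set-firing any nonempty set of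
vertices not containing `v` creates a negative coefficient inside the set. -/
def Reduced (G : Multigraph V) (v : V) (D : V → ℤ) : Prop :=
  (∀ w, w ≠ v → 0 ≤ D w) ∧
    ∀ U : Finset V, U.Nonempty → v ∉ U →
      ∃ w ∈ U, D w - ∑ u ∈ Uᶜ, (G.mult w u : ℤ) < 0

/-- The genus (first Betti number) of a graph: `|E| - |V| + 1`. -/
def genus (G : Multigraph V) : ℤ :=
  ((∑ u, ∑ v, G.mult u v : ℕ) : ℤ) / 2 - Fintype.card V + 1

/-- The canonical divisor of a graph. -/
def canonical (G : Multigraph V) : V → ℤ :=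
  fun w => (G.valence w : ℤ) - 2

/-- The subgraph induced on a set `S` of vertices (with all edges among `S`). -/
def induce (G : Multigraph V) (S : Finset V) : Multigraph {x // x ∈ S} where
  mult a b := G.mult a b
  symm a b := G.symm a b
  loopless a := G.loopless a

/-- `G.SeparatedBy u w v` means every path from `w` to `v` passes through `u`. -/
def SeparatedBy (G : Multigraph V) (u w v : V) : Prop :=
  ¬ Relation.ReflTransGen (fun x y => G.Adj x y ∧ x ≠ u ∧ y ≠ u) w v

end Multigraph

/-- Size of the `i`-th level of a quasi-banana graph: level `0` has a single vertex. -/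
def qbSize (q : ℕ → ℕ) (i : ℕ) : ℕ := if i = 0 then 1 else q i

/-- `ℓ` is a quasi-banana labelling of `G` exhibiting `G ≅ QB_m(q_1, …, q_m)`:
`ℓ` is a bijection onto the pairs `(i, j)` with `i ≤ m`, `1 ≤ j ≤ qbSize q i`
(vertex `u_{i,j}` is the vertex labelled `(i,j)`), and the edge multiplicities are:
one edge between distinct vertices of the same level, `(∑_{k=1}^{i} q_k) + 2` edges
between `u_{i,1}` and each `u_{i+1,j}`, and no other edges. -/
def Multigraph.IsQBLabelling (G : Multigraph V) (m : ℕ) (q : ℕ → ℕ) (ℓ : V → ℕ × ℕ) : Prop :=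
  (∀ i, 1 ≤ i → i ≤ m → 0 < q i) ∧
  Function.Injective ℓ ∧
  (∀ v : V, (ℓ v).1 ≤ m ∧ 1 ≤ (ℓ v).2 ∧ (ℓ v).2 ≤ qbSize q (ℓ v).1) ∧
  (∀ i j : ℕ, i ≤ m → 1 ≤ j → j ≤ qbSize q i → ∃ v, ℓ v = (i, j)) ∧
  (∀ v w : V, v ≠ w → G.mult v w =
    if (ℓ v).1 = (ℓ w).1 then 1
    else if (ℓ v).1 + 1 = (ℓ w).1 ∧ (ℓ v).2 = 1 then (∑ i ∈ Finset.Icc 1 (ℓ v).1, q i) + 2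
    else if (ℓ w).1 + 1 = (ℓ v).1 ∧ (ℓ w).2 = 1 then (∑ i ∈ Finset.Icc 1 (ℓ w).1, q i) + 2
    else 0)

/-- A graph is a quasi-banana graph if it is isomorphic to some `QB_m(N)`. -/
def Multigraph.IsQuasiBanana (G : Multigraph V) : Prop :=
  ∃ (m : ℕ) (q : ℕ → ℕ) (ℓ : V → ℕ × ℕ), G.IsQBLabelling m q ℓ

/-- The graph obtained from `G'` by attaching a complete graph `K_n`: `n` new vertices
pairwise joined by exactly one edge, each joined to `v` by exactly `k+1` edges. -/
def attachComplete (G' : Multigraph V) (v : V) (k n : ℕ) : Multigraph (V ⊕ Fin n) where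
  mult x y :=
    match x, y with
    | Sum.inl a, Sum.inl b => G'.mult a b
    | Sum.inl a, Sum.inr _ => if a = v then k + 1 else 0
    | Sum.inr _, Sum.inl b => if b = v then k + 1 else 0
    | Sum.inr i, Sum.inr j => if i = j then 0 else 1
  symm := by
    rintro (a | i) (b | j)
    · exact G'.symm a b
    · rfl
    · rfl
    · by_cases h : i = j
      · simp [h]
      · simp [h, Ne.symm h]
  loopless := by
    rintro (a | i)
    · exact G'.loopless a
    · simp

namespace Multigraph

/-- indicator of a vertex -/
def dl (x w : V) : ℤ := if w = x then 1 else 0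

lemma dl_nonneg (x w : V) : 0 ≤ dl x w := by unfold dl; split_ifs <;> norm_num

lemma sum_dl (x : V) : ∑ w, dl x w = 1 := by simp [dl]

lemma degree_laplacian (G : Multigraph V) (f : V → ℤ) : ∑ w, G.laplacian f w = 0 := by
  unfold laplacian
  have h : ∑ w, ∑ u, (G.mult w u : ℤ) * (f w - f u)
      = - ∑ w, ∑ u, (G.mult w u : ℤ) * (f w - f u) := by
    conv_lhs => rw [Finset.sum_comm]
    rw [← Finset.sum_neg_distrib]
    refine Finset.sum_congr rfl fun w _ => ?_
    rw [← Finset.sum_neg_distrib]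
    refine Finset.sum_congr rfl fun u _ => ?_
    rw [G.symm u w]; ring
  linarith

lemma laplacian_neg (G : Multigraph V) (f : V → ℤ) (w : V) :
    G.laplacian (fun x => - f x) w = - G.laplacian f w := by
  unfold laplacian
  rw [← Finset.sum_neg_distrib]
  refine Finset.sum_congr rfl fun u _ => ?_
  ring

lemma winnable_iff (G : Multigraph V) (D : V → ℤ) :
    G.Winnable D ↔ ∃ c : V → ℤ, ∀ w, 0 ≤ D w + G.laplacian c w := by
  constructor
  · rintro ⟨E, hE, f, rfl⟩
    refine ⟨fun x => - f x, fun w => ?_⟩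
    rw [laplacian_neg]
    have := hE w
    simp only [Pi.sub_apply] at this
    linarith
  · rintro ⟨c, hc⟩
    refine ⟨D - G.laplacian (fun x => - c x), fun w => ?_, _, rfl⟩
    have := hc w
    simp only [Pi.sub_apply]
    rw [laplacian_neg]
    linarith

lemma degree_nonneg_of_winnable (G : Multigraph V) (D : V → ℤ) (h : G.Winnable D) :
    0 ≤ degree D := by
  obtain ⟨c, hc⟩ := (G.winnable_iff D).1 h
  have h1 : 0 ≤ ∑ w, (D w + G.laplacian c w) := Finset.sum_nonneg fun w _ => hc w
  rw [Finset.sum_add_distrib, degree_laplacian] at h1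
  unfold degree
  linarith

/-- `rank ≥ r`-type property. -/
def RS (G : Multigraph V) (D : V → ℤ) (r : ℤ) : Prop :=
  ∀ E : V → ℤ, Effective E → degree E = r → G.Winnable (fun w => D w - E w)

lemma RS_le (G : Multigraph V) (v : V) (D : V → ℤ) (r : ℤ) (hr : 0 ≤ r) (h : G.RS D r) :
    r ≤ degree D := by
  have h1 := h (fun w => r * dl v w) (fun w => mul_nonneg hr (dl_nonneg _ _))
    (by unfold degree; rw [← Finset.mul_sum, sum_dl, mul_one])
  have h2 := G.degree_nonneg_of_winnable _ h1
  unfold degree at *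
  rw [Finset.sum_sub_distrib, ← Finset.mul_sum, sum_dl] at h2
  linarith

lemma RS_bdd (G : Multigraph V) (v : V) (D : V → ℤ) : BddAbove {r : ℤ | G.RS D r} := by
  refine ⟨max 0 (degree D), fun r hr => ?_⟩
  by_cases h : 0 ≤ r
  · exact le_max_of_le_right (G.RS_le v D r h hr)
  · exact le_max_of_le_left (by linarith)

lemma RS_ne (G : Multigraph V) (D : V → ℤ) : {r : ℤ | G.RS D r}.Nonempty := by
  refine ⟨-1, fun E hE hd => ?_⟩
  have : 0 ≤ degree E := Finset.sum_nonneg fun w _ => hE w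
  linarith

lemma RS_rank (G : Multigraph V) (v : V) (D : V → ℤ) : G.RS D (G.rank D) :=
  Int.csSup_mem (G.RS_ne D) (G.RS_bdd v D)

lemma RS_le_rank (G : Multigraph V) (v : V) (D : V → ℤ) (r : ℤ) (h : G.RS D r) :
    r ≤ G.rank D :=
  le_csSup (G.RS_bdd v D) h

lemma exists_rank_one (G : Multigraph V) (v : V) (n : ℕ) : ∀ (D : V → ℤ) (r : ℤ), 1 ≤ r →
    G.RS D r → degree D ≤ n → ∃ D', G.rank D' = 1 ∧ degree D' ≤ degree D := by
  induction n with
  | zero =>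
    intro D r hr h hd
    have := G.RS_le v D r (by linarith) h
    push_cast at hd
    linarith
  | succ n ih =>
    intro D r hr h hd
    by_cases h1 : G.rank D = 1
    · exact ⟨D, h1, le_rfl⟩
    have h2 := G.RS_le_rank v D r h
    have h3 : 2 ≤ G.rank D := by omega
    have h4 := G.RS_rank v D
    have hdeg : degree (fun w => D w - dl v w) = degree D - 1 := by
      unfold degree; rw [Finset.sum_sub_distrib, sum_dl]
    obtain ⟨D', hD', hle⟩ := ih (fun w => D w - dl v w) (G.rank D - 1) (by linarith) (by
      intro E hE hdE
      have := h4 (fun w => dl v w + E w) (fun w => add_nonneg (dl_nonneg _ _) (hE w)) (by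
        unfold degree at *; rw [Finset.sum_add_distrib, sum_dl, hdE]; ring)
      convert this using 2
      ring) (by rw [hdeg]; push_cast at hd; linarith)
    exact ⟨D', hD', by linarith⟩

lemma gonality_one_le (G : Multigraph V) (v : V) (D : V → ℤ) (h : G.RS D 1) :
    G.gonality 1 ≤ degree D := by
  obtain ⟨D', h1, h2⟩ := G.exists_rank_one v (degree D).toNat D 1 le_rfl h
    (Int.self_le_toNat _)
  refine le_trans (csInf_le ?_ ⟨D', h1, rfl⟩) h2
  refine ⟨1, ?_⟩
  rintro d ⟨D'', h3, rfl⟩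
  have := G.RS_rank v D''
  rw [h3] at this
  exact G.RS_le v D'' 1 (by norm_num) this

lemma eff_deg_one (E : V → ℤ) (hE : Effective E) (hd : degree E = 1) :
    ∃ z, E = dl z := by
  have hne : ∃ z, 0 < E z := by
    by_contra hcon
    push Not at hcon
    have : degree E ≤ 0 := Finset.sum_nonpos fun w _ => hcon w
    linarith
  obtain ⟨z, hz⟩ := hne
  refine ⟨z, ?_⟩
  have hnn : ∀ w ∈ Finset.univ, 0 ≤ E w - dl z w := by
    intro w _
    unfold dl
    split_ifs with h
    · subst h; linarith
    · have := hE w; linarith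
  have h0 : ∑ w, (E w - dl z w) = 0 := by
    rw [Finset.sum_sub_distrib, sum_dl]; unfold degree at hd; linarith
  have := (Finset.sum_eq_zero_iff_of_nonneg hnn).1 h0
  funext w
  have := this w (Finset.mem_univ w)
  linarith

lemma no_rank (G : Multigraph V) (hGT : G.GonalityTight) (D : V → ℤ)
    (hreal : G.Realises 2 D) (x y : V)
    (h : ∀ z, ∃ c : V → ℤ, ∀ w, dl x w + dl y w + dl z w ≤ D w + G.laplacian c w) : False := by
  have h1 : G.RS (fun w => D w - dl x w - dl y w) 1 := by
    intro E hE hd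
    obtain ⟨z, rfl⟩ := eff_deg_one E hE hd
    rw [winnable_iff]
    obtain ⟨c, hc⟩ := h z
    exact ⟨c, fun w => by have := hc w; linarith⟩
  have h2 := G.gonality_one_le x _ h1
  have h3 : degree (fun w => D w - dl x w - dl y w) = degree D - 2 := by
    unfold degree; rw [Finset.sum_sub_distrib, Finset.sum_sub_distrib, sum_dl, sum_dl]; ring
  rw [h3, hreal.2, hGT] at h2
  linarith

lemma rank_two (G : Multigraph V) (D : V → ℤ)
    (hreal : G.Realises 2 D) (x y : V) :
    ∃ c : V → ℤ, ∀ w, dl x w + dl y w ≤ D w + G.laplacian c w := by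
  have h1 := G.RS_rank x D
  rw [hreal.1] at h1
  have h2 := h1 (fun w => dl x w + dl y w)
    (fun w => add_nonneg (dl_nonneg _ _) (dl_nonneg _ _))
    (by unfold degree; rw [Finset.sum_add_distrib, sum_dl, sum_dl]; norm_num)
  obtain ⟨c, hc⟩ := (G.winnable_iff _).1 h2
  exact ⟨c, fun w => by have := hc w; linarith⟩

/-- For a reduced divisor, any script to an effective divisor is minimal at the base vertex. -/
lemma reduced_min (G : Multigraph V) (v : V) (D : V → ℤ) (hred : G.Reduced v D)
    (c : V → ℤ) (hc : ∀ w, 0 ≤ D w + G.laplacian c w) (w : V) : c v ≤ c w := by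
  obtain ⟨m, -, hm⟩ := Finset.exists_min_image Finset.univ c ⟨v, Finset.mem_univ v⟩
  by_contra hcon
  have hmw := hm w (Finset.mem_univ w)
  obtain ⟨x, hx, hlt⟩ := hred.2 (Finset.univ.filter fun x => c x = c m) ⟨m, by simp⟩
    (by simp only [Finset.mem_filter, Finset.mem_univ, true_and]; intro h; omega)
  have hxm : c x = c m := by simpa using hx
  have h1 : G.laplacian c x ≤
      - ∑ u ∈ (Finset.univ.filter fun x => c x = c m)ᶜ, (G.mult x u : ℤ) := by
    unfold laplacian
    rw [← Finset.sum_neg_distrib, Finset.compl_filter, Finset.sum_filter]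
    refine Finset.sum_le_sum fun u _ => ?_
    have hu := hm u (Finset.mem_univ u)
    split_ifs with h
    · rw [hxm, h]; simp
    · have h2 : (c x - c u) ≤ -1 := by omega
      have h3 : (0 : ℤ) ≤ G.mult x u := by positivity
      nlinarith
  have := hc x
  linarith

lemma laplacian_sub_const (G : Multigraph V) (c : V → ℤ) (t : ℤ) (w : V) :
    G.laplacian (fun x => c x - t) w = G.laplacian c w := by
  unfold laplacian
  refine Finset.sum_congr rfl fun u _ => ?_
  ring

lemma rank_two' (G : Multigraph V) (v : V) (D : V → ℤ) (hred : G.Reduced v D)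
    (hreal : G.Realises 2 D) (x y : V) :
    ∃ c : V → ℤ, c v = 0 ∧ (∀ w, 0 ≤ c w) ∧
      ∀ w, dl x w + dl y w ≤ D w + G.laplacian c w := by
  obtain ⟨c, hc⟩ := G.rank_two D hreal x y
  have h := G.reduced_min v D hred c
    (fun w => le_trans (add_nonneg (dl_nonneg _ _) (dl_nonneg _ _)) (hc w))
  refine ⟨fun w => c w - c v, by simp, fun w => by have := h w; simp; linarith, fun w => ?_⟩
  rw [laplacian_sub_const]
  exact hc w

/-- Restriction of a script to a side of a cut vertex. -/
lemma restrict_side (G : Multigraph V) (v : V) (S : Finset V) (hv : v ∉ S)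
    (hS : ∀ a ∈ S, ∀ b, b ∉ S → b ≠ v → G.mult a b = 0)
    (c : V → ℤ) (hcv : c v = 0) (hc : ∀ w, 0 ≤ c w) :
    (∀ w ∈ S, G.laplacian (fun x => if x ∈ S then c x else 0) w = G.laplacian c w) ∧
    (∀ w, w ∉ S → w ≠ v → G.laplacian (fun x => if x ∈ S then c x else 0) w = 0) ∧
    G.laplacian c v ≤ G.laplacian (fun x => if x ∈ S then c x else 0) v := by
  refine ⟨fun w hw => ?_, fun w hw hwv => ?_, ?_⟩
  · unfold laplacian
    refine Finset.sum_congr rfl fun u _ => ?_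
    by_cases hu : u ∈ S
    · simp [hw, hu]
    · by_cases huv : u = v
      · subst huv; simp [hw, hu, hcv]
      · simp [hS w hw u hu huv]
  · unfold laplacian
    refine Finset.sum_eq_zero fun u _ => ?_
    by_cases hu : u ∈ S
    · simp [G.symm w u, hS u hu w hw hwv]
    · simp [hw, hu]
  · unfold laplacian
    refine Finset.sum_le_sum fun u _ => ?_
    by_cases hu : u ∈ S
    · simp [hu, hv, hcv]
    · have := hc u
      simp only [hcv, hv, hu, if_false]
      have h3 : (0 : ℤ) ≤ G.mult v u := by positivity
      nlinarith

lemma closed_univ (G : Multigraph V) (hG : G.Connected) (P : V → Prop)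
    (hP : ∀ x y, P x → 0 < G.mult x y → P y) (x y : V) (hx : P x) : P y := by
  have := hG.2 x y
  induction this with
  | refl => exact hx
  | tail _ hab ih => exact hP _ _ ih hab

lemma lap_nonpos_le (G : Multigraph V) (c : V → ℤ) (hc : ∀ w, 0 ≤ c w) (w x : V)
    (hw : c w = 0) : G.laplacian c w ≤ - ((G.mult w x : ℤ) * c x) := by
  unfold laplacian
  have h : ∀ u ∈ Finset.univ, 0 ≤ (G.mult w u : ℤ) * c u :=
    fun u _ => mul_nonneg (by positivity) (hc u)
  have h1 := Finset.single_le_sum h (Finset.mem_univ x)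
  have h2 : ∑ u, (G.mult w u : ℤ) * (c w - c u) = - ∑ u, (G.mult w u : ℤ) * c u := by
    rw [← Finset.sum_neg_distrib]
    exact Finset.sum_congr rfl fun u _ => by rw [hw]; ring
  rw [h2]; linarith

lemma lap_zero_of (G : Multigraph V) (c : V → ℤ) (w : V)
    (hw : c w = 0) (h : ∀ u, c u ≠ 0 → G.mult w u = 0) : G.laplacian c w = 0 := by
  unfold laplacian
  refine Finset.sum_eq_zero fun u _ => ?_
  by_cases hu : c u = 0
  · simp [hu, hw]
  · simp [h u hu]

/-- The hypotheses of the structure lemma, in convenient form. -/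
structure Setup (G : Multigraph V) (v : V) (A B : Finset V) (k : ℕ) (D : V → ℤ) : Prop where
  hG : G.Connected
  hGT : G.GonalityTight
  hvA : v ∉ A
  hvB : v ∉ B
  hcov : ∀ w, w = v ∨ w ∈ A ∨ w ∈ B
  hdisj : ∀ a ∈ A, a ∉ B
  hnoedge : ∀ a ∈ A, ∀ b ∈ B, G.mult a b = 0
  hk : 1 ≤ k
  hDv : D v = k + 1
  hDA : ∀ a ∈ A, D a = 1
  hDB : ∀ b ∈ B, D b = 0
  hred : G.Reduced v D
  hreal : G.Realises 2 D

namespace Setup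

variable {G : Multigraph V} {v : V} {A B : Finset V} {k : ℕ} {D : V → ℤ}

lemma ne_v (S : Setup G v A B k D) {a : V} (ha : a ∈ A) : a ≠ v :=
  fun h => S.hvA (h ▸ ha)

lemma D_nonneg (S : Setup G v A B k D) (w : V) : 0 ≤ D w := by
  rcases S.hcov w with rfl | h | h
  · rw [S.hDv]; positivity
  · rw [S.hDA w h]; norm_num
  · rw [S.hDB w h]

lemma lap_zero (w : V) : G.laplacian (fun _ => (0 : ℤ)) w = 0 := by
  simp [laplacian]

lemma factB (S : Setup G v A B k D) (b : V) (hb : b ∈ B) : ∃ c : V → ℤ,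
    (∀ w, dl v w + dl b w ≤ D w + G.laplacian c w) ∧ ∀ a ∈ A, G.laplacian c a = 0 := by
  obtain ⟨c, hcv, hc0, hc⟩ := G.rank_two' v D S.hred S.hreal v b
  obtain ⟨h1, h2, h3⟩ := G.restrict_side v B S.hvB (by
    intro x hx y hy hyv
    rw [G.symm]
    rcases S.hcov y with h | h | h
    · exact absurd h hyv
    · exact S.hnoedge y h x hx
    · exact absurd h hy) c hcv hc0
  refine ⟨_, fun w => ?_, fun a ha => h2 a (S.hdisj a ha) (S.ne_v ha)⟩
  rcases S.hcov w with rfl | h | h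
  · have := hc w; linarith
  · rw [h2 w (S.hdisj w h) (S.ne_v h), S.hDA w h]
    have hwb : w ≠ b := fun e => S.hdisj w h (e ▸ hb)
    simp [dl, S.ne_v h, hwb]
  · rw [h1 w h]; exact hc w

/-- No effective divisor equivalent to `D` contains `v + 2a`. -/
lemma star (S : Setup G v A B k D) (a : V) (ha : a ∈ A) (c : V → ℤ)
    (hc : ∀ w, dl v w + 2 * dl a w ≤ D w + G.laplacian c w) : False := by
  have hav := S.ne_v ha
  refine G.no_rank S.hGT D S.hreal v a fun z => ?_
  rcases S.hcov z with rfl | hz | hz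
  · refine ⟨fun _ => 0, fun w => ?_⟩
    rw [lap_zero]
    have hk : (1 : ℤ) ≤ k := by exact_mod_cast S.hk
    have h0 := S.D_nonneg w
    by_cases h1 : w = z
    · have : w ≠ a := by rintro rfl; exact hav h1
      simp only [dl, h1, if_true, S.hDv]
      rw [if_neg (Ne.symm hav)]; linarith
    · by_cases h2 : w = a
      · simp [dl, h2, hav, S.hDA a ha]
      · simp [dl, h1, h2, h0]
  · by_cases hza : z = a
    · subst hza
      exact ⟨c, fun w => by have := hc w; linarith⟩
    · refine ⟨fun _ => 0, fun w => ?_⟩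
      rw [lap_zero]
      have h0 := S.D_nonneg w
      have hzv := S.ne_v hz
      by_cases h1 : w = v
      · subst h1; simp [dl, Ne.symm hav, Ne.symm hzv, S.hDv]
      · by_cases h2 : w = a
        · subst h2; simp [dl, hav, Ne.symm hza, S.hDA w ha]
        · by_cases h3 : w = z
          · subst h3; simp [dl, hzv, hza, S.hDA w hz]
          · simp [dl, h1, h2, h3, h0]
  · obtain ⟨c, h1, h2⟩ := S.factB z hz
    refine ⟨c, fun w => ?_⟩
    by_cases h : w = a
    · subst h
      have hwz : w ≠ z := fun e => S.hdisj w ha (e ▸ hz)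
      rw [h2 w ha, S.hDA w ha]
      simp [dl, hav, hwz]
    · have := h1 w
      simp only [dl, h, if_false] at *
      linarith

lemma pair (S : Setup G v A B k D) (a b : V) (ha : a ∈ A) (hb : b ∈ A) (hab : a ≠ b)
    (h1 : ∃ c : V → ℤ, ∀ w, 2 * dl a w + dl b w ≤ D w + G.laplacian c w)
    (h2 : ∃ c : V → ℤ, ∀ w, dl a w + 2 * dl b w ≤ D w + G.laplacian c w) : False := by
  have hav := S.ne_v ha
  have hbv := S.ne_v hb
  have key : ∀ w, dl v w + dl a w + dl b w ≤ D w := by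
    intro w
    have h0 := S.D_nonneg w
    by_cases h1 : w = v
    · subst h1; simp [dl, Ne.symm hav, Ne.symm hbv, S.hDv]
    · by_cases h2 : w = a
      · subst h2; simp [dl, hav, hab, S.hDA w ha]
      · by_cases h3 : w = b
        · subst h3; simp [dl, hbv, Ne.symm hab, S.hDA w hb]
        · simp [dl, h1, h2, h3, h0]
  refine G.no_rank S.hGT D S.hreal a b fun z => ?_
  rcases S.hcov z with rfl | hz | hz
  · refine ⟨fun _ => 0, fun w => ?_⟩
    rw [lap_zero]
    have := key w
    linarith
  · by_cases hza : z = a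
    · subst hza
      obtain ⟨c, hc⟩ := h1
      exact ⟨c, fun w => by have := hc w; linarith⟩
    by_cases hzb : z = b
    · subst hzb
      obtain ⟨c, hc⟩ := h2
      exact ⟨c, fun w => by have := hc w; linarith⟩
    refine ⟨fun _ => 0, fun w => ?_⟩
    rw [lap_zero]
    have h4 := key w
    have h5 := dl_nonneg v w
    by_cases h3 : w = z
    · subst h3; simp [dl, hza, hzb, S.hDA w hz]
    · have : dl z w = 0 := by simp [dl, h3]
      linarith
  · obtain ⟨c, h1, h2⟩ := S.factB z hz
    refine ⟨c, fun w => ?_⟩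
    by_cases hw : w ∈ A
    · have hwz : w ≠ z := fun e => S.hdisj w hw (e ▸ hz)
      have : dl z w = 0 := by simp [dl, hwz]
      have := key w
      have := dl_nonneg v w
      rw [h2 w hw]; linarith
    · have hwa : w ≠ a := fun e => hw (e ▸ ha)
      have hwb : w ≠ b := fun e => hw (e ▸ hb)
      have := h1 w
      have := dl_nonneg v w
      have : dl a w = 0 := by simp [dl, hwa]
      have : dl b w = 0 := by simp [dl, hwb]
      linarith

/-- Structure of legal sets. -/
lemma legal (S : Setup G v A B k D) (W : V → Prop) [DecidablePred W] (hWA : ∀ w, W w → w ∈ A)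
    (hne : ∃ w, W w)
    (hleg : ∀ w, 0 ≤ D w + G.laplacian (fun x => if W x then 1 else 0) w) :
    ∃ a, W a ∧ G.mult v a = k + 1 ∧ ∀ w, W w → w ≠ a → ∀ x, ¬ W x → G.mult w x = 0 := by
  set c : V → ℤ := fun x => if W x then 1 else 0 with hcdef
  have hc0 : ∀ w, 0 ≤ c w := fun w => by simp only [hcdef]; split_ifs <;> norm_num
  have hvW : ¬ W v := fun h => S.hvA (hWA v h)
  have hin : ∀ w, W w → ∀ x, ¬ W x → (G.mult w x : ℤ) ≤ G.laplacian c w := by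
    intro w hw x hx
    unfold laplacian
    have h : ∀ u ∈ Finset.univ, 0 ≤ (G.mult w u : ℤ) * (c w - c u) := by
      intro u _
      refine mul_nonneg (by positivity) ?_
      simp only [hcdef, hw, if_true]; split_ifs <;> norm_num
    have h1 := Finset.single_le_sum h (Finset.mem_univ x)
    simpa [hcdef, hw, hx] using h1
  have hin0 : ∀ w, W w → 0 ≤ G.laplacian c w := by
    intro w hw
    have := hin w hw v hvW
    have : (0 : ℤ) ≤ G.mult w v := by positivity
    linarith
  -- uniqueness of the boundary vertex
  have huniq : ∀ a b, W a → W b → a ≠ b → ∀ x y, ¬ W x → ¬ W y →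
      0 < G.mult a x → 0 < G.mult b y → False := by
    intro a b hWa hWb hab x y hx hy hax hby
    have h1 := hin a hWa x hx
    have h2 := hin b hWb y hy
    have h1' : (1 : ℤ) ≤ G.mult a x := by exact_mod_cast hax
    have h2' : (1 : ℤ) ≤ G.mult b y := by exact_mod_cast hby
    have key : ∀ w, 2 * dl a w + 2 * dl b w ≤ D w + G.laplacian c w := by
      intro w
      by_cases hwa : w = a
      · subst hwa
        rw [S.hDA w (hWA w hWa)]; simp [dl, hab]; linarith
      · by_cases hwb : w = b
        · subst hwb
          rw [S.hDA w (hWA w hWb)]; simp [dl, hwa]; linarith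
        · simp [dl, hwa, hwb]; exact hleg w
    exact S.pair a b (hWA a hWa) (hWA b hWb) hab
      ⟨c, fun w => by have := key w; have := dl_nonneg b w; linarith⟩
      ⟨c, fun w => by have := key w; have := dl_nonneg a w; linarith⟩
  -- some boundary vertex exists
  have hex : ∃ a x, W a ∧ ¬ W x ∧ 0 < G.mult a x := by
    by_contra hcon
    push Not at hcon
    obtain ⟨w, hw⟩ := hne
    refine hvW (G.closed_univ S.hG W (fun x y hx hxy => ?_) w v hw)
    by_contra hy
    have := hcon x y hx hy
    omega
  obtain ⟨a, x, hWa, hWx, hax⟩ := hex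
  have hrest : ∀ w, W w → w ≠ a → ∀ x, ¬ W x → G.mult w x = 0 := by
    intro w hw hwa y hy
    by_contra h
    exact huniq w a hw hWa hwa y x hy hWx (Nat.pos_of_ne_zero h) hax
  refine ⟨a, hWa, ?_, hrest⟩
  -- all chips of `v` are used
  have hv0 : D v + G.laplacian c v = 0 := by
    refine le_antisymm ?_ (hleg v)
    by_contra hcon
    push Not at hcon
    refine S.star a (hWA a hWa) c fun w => ?_
    have hav := S.ne_v (hWA a hWa)
    by_cases hwv : w = v
    · subst hwv; simp [dl, Ne.symm hav]; linarith
    · by_cases hwa : w = a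
      · subst hwa
        have h1 := hin w hWa x hWx
        have h1' : (1 : ℤ) ≤ G.mult w x := by exact_mod_cast hax
        rw [S.hDA w (hWA w hWa)]; simp [dl, hav]; linarith
      · simp [dl, hwv, hwa]; exact hleg w
  have hlv : G.laplacian c v = - (G.mult v a : ℤ) := by
    unfold laplacian
    rw [Finset.sum_eq_single a]
    · simp [hcdef, hvW, hWa]
    · intro u _ hua
      by_cases hu : W u
      · rw [G.symm, hrest u hu hua v hvW]; simp
      · simp [hcdef, hu, hvW]
    · simp
  rw [S.hDv, hlv] at hv0
  have : (G.mult v a : ℤ) = k + 1 := by linarith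
  exact_mod_cast this

lemma main (S : Setup G v A B k D) (w : V) (hw : w ∈ A) : ∃ c : V → ℤ,
    (∀ x, 0 ≤ c x) ∧ (∀ x, c x ≠ 0 → x ∈ A) ∧ 
    (∀ x, 2 * dl w x ≤ D x + G.laplacian c x) ∧ c w ≠ 0 ∧
    ∃ a, c a ≠ 0 ∧ G.mult v a = k + 1 ∧ ∀ y, c y ≠ 0 → y ≠ a → ∀ x, c x = 0 → G.mult y x = 0 := by
  obtain ⟨c', hcv, hc0', hc'⟩ := G.rank_two' v D S.hred S.hreal w w
  obtain ⟨h1, h2, h3⟩ := G.restrict_side v A S.hvA (by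
    intro x hx y hy hyv
    rcases S.hcov y with h | h | h
    · exact absurd h hyv
    · exact absurd h hy
    · exact S.hnoedge x hx y h) c' hcv hc0'
  set c : V → ℤ := fun x => if x ∈ A then c' x else 0 with hcdef
  have hc0 : ∀ x, 0 ≤ c x := fun x => by
    simp only [hcdef]; split_ifs
    · exact hc0' x
    · exact le_rfl
  have hsupp : ∀ x, c x ≠ 0 → x ∈ A := fun x hx => by
    by_contra h; exact hx (by simp [hcdef, h])
  have hc : ∀ x, 2 * dl w x ≤ D x + G.laplacian c x := by
    intro x
    have hx' := hc' x
    rcases S.hcov x with rfl | h | h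
    · linarith
    · rw [h1 x h]; linarith
    · have hxA : x ∉ A := fun h' => S.hdisj x h' h
      have hxw : x ≠ w := fun e => hxA (e ▸ hw)
      rw [h2 x hxA (fun e => S.hvB (e ▸ h)), S.hDB x h]
      simp [dl, hxw]
  have hcw : c w ≠ 0 := by
    intro h0
    have ha := G.lap_nonpos_le c hc0 w w h0
    have hb := hc w
    rw [h0, S.hDA w hw] at *
    simp [dl] at hb ha
    linarith
  refine ⟨c, hc0, hsupp, hc, hcw, ?_⟩
  obtain ⟨a, ha1, ha2, ha3⟩ := S.legal (fun x => c x ≠ 0) hsupp ⟨w, hcw⟩ (by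
    intro x
    by_cases hx : c x = 0
    · have hle : G.laplacian c x ≤ G.laplacian (fun x => if c x ≠ 0 then 1 else 0) x := by
        unfold laplacian
        refine Finset.sum_le_sum fun u _ => mul_le_mul_of_nonneg_left ?_ (by positivity)
        have := hc0 u
        by_cases hu : c u = 0
        · simp [hx, hu]
        · simp [hx, hu]; omega
      have := hc x
      have := dl_nonneg w x
      linarith
    · have : 0 ≤ G.laplacian (fun x => if c x ≠ 0 then 1 else 0) x := by
        unfold laplacian
        refine Finset.sum_nonneg fun u _ => mul_nonneg (by positivity) ?_
        by_cases hu : c u = 0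
        · simp [hx, hu]
        · simp [hx, hu]
      have := S.D_nonneg x
      linarith)
  exact ⟨a, ha1, ha2, fun y hy hya x hx => ha3 y hy hya x (by simpa using hx)⟩

end Setup
end Multigraph

set_option maxHeartbeats 2000000 in
/-- The structure lemma for gonality-tight graphs: with `G` gonality-tight,
`v` a vertex whose removal leaves the disjoint union of `G'` (vertex set `A`) and `G''`
(vertex set `B`), and `D₂ = (k+1)·v + ∑_{w ∈ A} w` a `v`-reduced divisor realising the
second gonality, the four structural conclusions hold (`N` is the set of neighbours of `v`
in `G'`). -/
theorem stmt6 (G : Multigraph V) (hG : G.Connected) (hGT : G.GonalityTight)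
    (v : V) (A B : Finset V)
    (hAB : A ∪ B = Finset.univ.erase v) (hdisj : Disjoint A B)
    (hnoedge : ∀ a ∈ A, ∀ b ∈ B, G.mult a b = 0)
    (k : ℕ) (hk : 1 ≤ k)
    (D₂ : V → ℤ)
    (hD₂ : D₂ = fun w => if w = v then (k : ℤ) + 1 else if w ∈ A then 1 else 0)
    (hred : G.Reduced v D₂) (hreal : G.Realises 2 D₂)
    (N : Finset V) (hN : N = A.filter (fun a => 0 < G.mult v a)) :
    (∀ a ∈ N, G.mult v a = k + 1) ∧
    (∀ a ∈ N, ∀ b ∈ N, a ≠ b → G.mult a b = 1) ∧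
    ((A \ N).Nonempty →
      ∃! u, u ∈ N ∧ ∀ w ∈ A \ N, G.SeparatedBy u w v) ∧
    (∀ u ∈ N, (∀ w ∈ A \ N, G.SeparatedBy u w v) →
      G.Reduced u
        (fun w => if w = u then (k : ℤ) + N.card + 1 else if w ∈ A \ N then 1 else 0) ∧
      G.LinEquiv D₂
        (fun w => if w = u then (k : ℤ) + N.card + 1 else if w ∈ A \ N then 1 else 0)) := by
  classical
  have hvA : v ∉ A := fun h => by
    have : v ∈ A ∪ B := Finset.mem_union_left _ h
    rw [hAB] at this; simp at this
  have hvB : v ∉ B := fun h => by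
    have : v ∈ A ∪ B := Finset.mem_union_right _ h
    rw [hAB] at this; simp at this
  have S : Multigraph.Setup G v A B k D₂ := {
    hG := hG, hGT := hGT, hvA := hvA, hvB := hvB
    hcov := fun w => by
      by_cases h : w = v
      · exact Or.inl h
      · have : w ∈ A ∪ B := by rw [hAB]; simp [h]
        exact Or.inr (Finset.mem_union.1 this)
    hdisj := fun a ha hb => Finset.disjoint_left.1 hdisj ha hb
    hnoedge := hnoedge, hk := hk
    hDv := by simp [hD₂]
    hDA := fun a ha => by
      have : a ≠ v := fun e => hvA (e ▸ ha)
      simp [hD₂, this, ha]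
    hDB := fun b hb => by
      have h1 : b ≠ v := fun e => hvB (e ▸ hb)
      have h2 : b ∉ A := fun h => Finset.disjoint_left.1 hdisj h hb
      simp [hD₂, h1, h2]
    hred := hred, hreal := hreal }
  have memN : ∀ a, a ∈ N ↔ a ∈ A ∧ 0 < G.mult v a := fun a => by rw [hN]; simp
  have cv : ∀ c : V → ℤ, (∀ x, c x ≠ 0 → x ∈ A) → c v = 0 := fun c hc => by
    by_contra h; exact hvA (hc v h)
  -- a vertex of `N` in the support is the boundary vertex
  have bd : ∀ (c : V → ℤ) (a : V), (∀ x, c x ≠ 0 → x ∈ A) →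
      (∀ y, c y ≠ 0 → y ≠ a → ∀ x, c x = 0 → G.mult y x = 0) →
      ∀ b ∈ N, c b ≠ 0 → b = a := by
    intro c a hs hb b hbN hcb
    by_contra hne
    have h1 := hb b hcb hne v (cv c hs)
    have h2 := ((memN b).1 hbN).2
    rw [G.symm] at h2; omega
  have part1 : ∀ a ∈ N, G.mult v a = k + 1 := by
    intro a ha
    obtain ⟨c, hc0, hs, hc, hca, a', ha', hm, hb⟩ := S.main a ((memN a).1 ha).1
    rw [bd c a' hs hb a ha hca]; exact hm
  have part2 : ∀ a ∈ N, ∀ b ∈ N, a ≠ b → G.mult a b = 1 := by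
    -- one-sided analysis
    have aux : ∀ a ∈ N, ∀ b ∈ N, a ≠ b → G.mult a b ≤ 1 ∧ (G.mult a b = 0 →
        ∃ c : V → ℤ, ∀ w, 2 * Multigraph.dl a w + Multigraph.dl b w
          ≤ D₂ w + G.laplacian c w) := by
      intro a ha b hb hab
      obtain ⟨c, hc0, hs, hc, hca, a', ha', hm, hbd⟩ := S.main a ((memN a).1 ha).1
      obtain rfl := bd c a' hs hbd a ha hca
      have hcb : c b = 0 := by
        by_contra h
        exact hab (bd c a hs hbd b hb h).symm
      have hDb := S.hDA b ((memN b).1 hb).1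
      constructor
      · have h1 := G.lap_nonpos_le c hc0 b a hcb
        have h2 := hc b
        rw [hDb] at h2
        have h3 := Multigraph.dl_nonneg a b
        have h4 : (1 : ℤ) ≤ c a := by have := hc0 a; omega
        have h5 : (0 : ℤ) ≤ G.mult b a := by positivity
        have h6 : (G.mult b a : ℤ) ≤ 1 := by nlinarith
        rw [G.symm]; exact_mod_cast h6
      · intro h0
        refine ⟨c, fun w => ?_⟩
        by_cases hwb : w = b
        · subst hwb
          rw [G.lap_zero_of c w hcb, hDb]
          · simp [Multigraph.dl, Ne.symm hab]
          · intro u hu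
            rw [G.symm]
            by_cases hua : u = a
            · subst hua; exact h0
            · exact hbd u hu hua w hcb
        · have := hc w
          simp only [Multigraph.dl, hwb, if_false] at *
          linarith
    intro a ha b hb hab
    obtain ⟨h1, h2⟩ := aux a ha b hb hab
    obtain ⟨-, h3⟩ := aux b hb a ha (Ne.symm hab)
    by_contra hne
    have h0 : G.mult a b = 0 := by omega
    obtain ⟨c, hc⟩ := h3 (by rw [G.symm]; exact h0)
    exact S.pair a b ((memN a).1 ha).1 ((memN b).1 hb).1 hab (h2 h0)
      ⟨c, fun w => by have := hc w; linarith⟩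
  -- one-sided analysis for (3)
  have aux3 : ∀ w ∈ A \ N, ∀ w' ∈ A \ N, ∀ (c c' : V → ℤ) (a a' : V),
      (∀ x, c x ≠ 0 → x ∈ A) → (∀ x, c' x ≠ 0 → x ∈ A) →
      (∀ x, 2 * Multigraph.dl w x ≤ D₂ x + G.laplacian c x) →
      c' w' ≠ 0 → c a ≠ 0 → c' a' ≠ 0 → a ∈ N → a' ∈ N → a ≠ a' →
      (∀ y, c y ≠ 0 → y ≠ a → ∀ x, c x = 0 → G.mult y x = 0) →
      (∀ y, c' y ≠ 0 → y ≠ a' → ∀ x, c' x = 0 → G.mult y x = 0) →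
      c w' = 0 ∧ ∀ x, 2 * Multigraph.dl w x + Multigraph.dl w' x ≤ D₂ x + G.laplacian c x := by
    intro w hw w' hw' c c' a a' hs hs' hc hcw' hca hca' haN haN' haa hb hb'
    have hc'a : c' a = 0 := by
      by_contra h; exact haa (bd c' a' hs' hb' a haN h)
    have hca' : c a' = 0 := by
      by_contra h; exact haa (bd c a hs hb a' haN' h).symm
    have hz : c w' = 0 := by
      by_contra h
      have := G.closed_univ hG (fun x => c x ≠ 0 ∧ c' x ≠ 0) (by
        rintro x y ⟨hx, hx'⟩ hxy
        have hxa : x ≠ a := by rintro rfl; exact hx' hc'a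
        have hxa' : x ≠ a' := by rintro rfl; exact hx hca'
        constructor
        · intro h0; have := hb x hx hxa y h0; omega
        · intro h0; have := hb' x hx' hxa' y h0; omega) w' v ⟨h, hcw'⟩
      exact this.1 (cv c hs)
    refine ⟨hz, fun x => ?_⟩
    have hne : w' ≠ a' := by
      rintro rfl; exact (Finset.mem_sdiff.1 hw').2 haN'
    by_cases hx : x = w'
    · subst hx
      have hl : G.laplacian c x = 0 := by
        refine G.lap_zero_of c x hz fun u hu => ?_
        by_cases hua : u = a
        · subst hua; exact hb' x hcw' hne u hc'a
        · rw [G.symm]; exact hb u hu hua x hz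
      have h1 := hc x
      rw [hl, S.hDA x (Finset.mem_sdiff.1 hw').1] at h1 ⊢
      have h2 : Multigraph.dl x x = 1 := by simp [Multigraph.dl]
      have h3 := Multigraph.dl_nonneg w x
      rw [h2]
      omega
    · have := hc x
      have h0 : Multigraph.dl w' x = 0 := by simp [Multigraph.dl, hx]
      linarith
  -- a crossing edge
  have cross : (A \ N).Nonempty → ∃ x ∈ N, ∀ u ∈ N, (∀ w ∈ A \ N, G.SeparatedBy u w v) → u = x := by
    rintro ⟨w0, hw0⟩
    have : ∃ w y, w ∈ A \ N ∧ y ∉ A \ N ∧ 0 < G.mult w y := by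
      by_contra hcon
      push Not at hcon
      have := G.closed_univ hG (fun x => x ∈ A \ N) (by
        intro x y hx hxy
        by_contra hy
        have := hcon x y hx hy
        omega) w0 v hw0
      exact hvA (Finset.mem_sdiff.1 this).1
    obtain ⟨w, y, hw, hy, hwy⟩ := this
    have hwA := (Finset.mem_sdiff.1 hw).1
    have hwN := (Finset.mem_sdiff.1 hw).2
    have hyN : y ∈ N := by
      rcases S.hcov y with rfl | h | h
      · exfalso; apply hwN; rw [memN, G.symm]; exact ⟨hwA, hwy⟩
      · by_contra hn; exact hy (Finset.mem_sdiff.2 ⟨h, hn⟩)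
      · have := hnoedge w hwA y h; omega
    refine ⟨y, hyN, fun u hu hsep => ?_⟩
    by_contra hne
    refine hsep w hw ?_
    have hwu : w ≠ u := by rintro rfl; exact hwN hu
    have hvu : v ≠ u := by rintro rfl; exact hvA ((memN v).1 hu).1
    refine Relation.ReflTransGen.tail (Relation.ReflTransGen.single ⟨hwy, hwu, Ne.symm hne⟩)
      ⟨?_, Ne.symm hne, hvu⟩
    unfold Multigraph.Adj
    rw [G.symm]; exact ((memN y).1 hyN).2
  have part3 : (A \ N).Nonempty → ∃! u, u ∈ N ∧ ∀ w ∈ A \ N, G.SeparatedBy u w v := by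
    intro hne
    obtain ⟨x, -, hx⟩ := cross hne
    obtain ⟨w0, hw0⟩ := hne
    obtain ⟨c, hc0, hs, hc, hcw, a, hca, hm, hb⟩ := S.main w0 (Finset.mem_sdiff.1 hw0).1
    have haN : a ∈ N := (memN a).2 ⟨hs a hca, by omega⟩
    have hsep : ∀ w ∈ A \ N, G.SeparatedBy a w v := by
      intro w hw
      obtain ⟨c', hc0', hs', hc', hcw', a', hca', hm', hb'⟩ := S.main w (Finset.mem_sdiff.1 hw).1
      have haN' : a' ∈ N := (memN a').2 ⟨hs' a' hca', by omega⟩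
      have haa : a = a' := by
        by_contra haa
        obtain ⟨h1, h2⟩ := aux3 w0 hw0 w hw c c' a a' hs hs' hc hcw' hca hca' haN haN' haa hb hb'
        obtain ⟨h3, h4⟩ := aux3 w hw w0 hw0 c' c a' a hs' hs hc' hcw hca' hca haN' haN
          (Ne.symm haa) hb' hb
        have hww : w0 ≠ w := by rintro rfl; exact hcw h1
        exact S.pair w0 w (Finset.mem_sdiff.1 hw0).1 (Finset.mem_sdiff.1 hw).1 hww ⟨c, h2⟩
          ⟨c', fun x => by have := h4 x; linarith⟩
      subst haa
      intro hpath
      have : ∀ z, Relation.ReflTransGen (fun x y => G.Adj x y ∧ x ≠ a ∧ y ≠ a) w z → c' z ≠ 0 := by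
        intro z hz
        induction hz with
        | refl => exact hcw'
        | tail _ hxy ih =>
          intro h0
          have h1 := hb' _ ih hxy.2.1 _ h0
          have h2 := hxy.1
          unfold Multigraph.Adj at h2
          omega
      exact this v hpath (cv c' hs')
    refine ⟨a, ⟨haN, hsep⟩, ?_⟩
    rintro y ⟨hy1, hy2⟩
    rw [hx y hy1 hy2, hx a haN hsep]
  refine ⟨part1, part2, part3, ?_⟩
  intro u hu hsep
  have huA := ((memN u).1 hu).1
  have huv : u ≠ v := S.ne_v huA
  have hno : ∀ w ∈ A \ N, ∀ x ∈ N, x ≠ u → G.mult w x = 0 := by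
    intro w hw x hx hxu
    by_contra h
    refine hsep w hw ?_
    have hwu : w ≠ u := by rintro rfl; exact (Finset.mem_sdiff.1 hw).2 hu
    refine Relation.ReflTransGen.tail
      (Relation.ReflTransGen.single ⟨Nat.pos_of_ne_zero h, hwu, hxu⟩) ⟨?_, hxu, Ne.symm huv⟩
    unfold Multigraph.Adj
    rw [G.symm]; exact ((memN x).1 hx).2
  have hnv : ∀ w ∈ A \ N, G.mult w v = 0 := by
    intro w hw
    by_contra h
    rw [G.symm] at h
    exact (Finset.mem_sdiff.1 hw).2 ((memN w).2 ⟨(Finset.mem_sdiff.1 hw).1, Nat.pos_of_ne_zero h⟩)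
  constructor
  · refine ⟨fun w hw => ?_, fun U hU huU => ?_⟩
    · simp only [hw, if_false]; split_ifs <;> norm_num
    by_contra hcon
    push Not at hcon
    -- vertices without chips have no edges leaving `U`
    have hclosed : ∀ w ∈ U, w ∉ A \ N → ∀ x, x ∉ U → G.mult w x = 0 := by
      intro w hw hwA x hx
      have h1 := hcon w hw
      have hwu : w ≠ u := by rintro rfl; exact huU hw
      simp only [hwu, if_false, hwA] at h1
      have h2 := Finset.single_le_sum (f := fun x => (G.mult w x : ℤ)) (s := Uᶜ)
        (fun i _ => by positivity) (Finset.mem_compl.2 hx)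
      have h3 : (G.mult w x : ℤ) ≤ 0 := by
        linarith
      have : (0 : ℤ) ≤ G.mult w x := by positivity
      exact_mod_cast le_antisymm h3 this
    have hvU : v ∉ U := by
      intro h
      have := hclosed v h (fun h' => hvA (Finset.mem_sdiff.1 h').1) u huU
      have := part1 u hu
      omega
    have hNU : ∀ x ∈ N, x ∉ U := by
      intro x hx hxU
      have h1 := hclosed x hxU (fun h' => (Finset.mem_sdiff.1 h').2 hx) v hvU
      have h2 := ((memN x).1 hx).2
      rw [G.symm] at h2; omega
    have hBU : ∀ b ∈ B, b ∉ U := by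
      intro b hb hbU
      have := G.closed_univ hG (fun x => x ∈ U ∧ x ∈ B) (by
        rintro x y ⟨hx, hxB⟩ hxy
        have hyU : y ∈ U := by
          by_contra hy
          have := hclosed x hx (fun h' => S.hdisj x (Finset.mem_sdiff.1 h').1 hxB) y hy
          omega
        refine ⟨hyU, ?_⟩
        rcases S.hcov y with rfl | h | h
        · exact absurd hyU hvU
        · have := hnoedge y h x hxB
          rw [G.symm] at hxy; omega
        · exact h) b v ⟨hbU, hb⟩
      exact hvU this.1
    obtain ⟨w, hwU, hlt⟩ := hred.2 U hU hvU
    have hwA : w ∈ A := by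
      rcases S.hcov w with rfl | h | h
      · exact absurd hwU hvU
      · exact h
      · exact absurd hwU (hBU w h)
    have hwN : w ∈ A \ N := Finset.mem_sdiff.2 ⟨hwA, fun h => hNU w h hwU⟩
    have hwu : w ≠ u := by rintro rfl; exact huU hwU
    have h1 := hcon w hwU
    simp only [hwu, if_false, hwN, if_true] at h1
    rw [S.hDA w hwA] at hlt
    linarith
  · -- fire everything outside `{u} ∪ (A \ N)`
    have huAN : u ∉ A \ N := fun h => (Finset.mem_sdiff.1 h).2 hu
    refine ⟨fun x => if x = u ∨ x ∈ A \ N then 0 else 1, ?_⟩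
    funext w
    simp only [Pi.sub_apply]
    set f : V → ℤ := fun x => if x = u ∨ x ∈ A \ N then 0 else 1 with hf
    have fu : f u = 0 := by simp [hf]
    have fAN : ∀ x ∈ A \ N, f x = 0 := fun x hx => by simp only [hf, hx, or_true, if_true]
    have fo : ∀ x, x ≠ u → x ∉ A \ N → f x = 1 := fun x h1 h2 => by simp only [hf, h1, h2, or_self, if_false]
    have hvAN : v ∉ A \ N := fun h => hvA (Finset.mem_sdiff.1 h).1
    have fv : f v = 1 := fo v (Ne.symm huv) hvAN
    have fB : ∀ b ∈ B, f b = 1 := fun b hb =>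
      fo b (by rintro rfl; exact S.hdisj _ huA hb) (fun h => S.hdisj b (Finset.mem_sdiff.1 h).1 hb)
    -- Laplacian at a vertex outside the set: only the edges to `u` matter
    have lapo : ∀ w, w ≠ u → w ∉ A \ N → (∀ x ∈ A \ N, G.mult w x = 0) →
        G.laplacian f w = G.mult w u := by
      intro w h1 h2 h3
      unfold Multigraph.laplacian
      rw [Finset.sum_eq_single u]
      · rw [fo w h1 h2, fu]; ring
      · intro x _ hxu
        by_cases hx : x ∈ A \ N
        · rw [h3 x hx]; simp
        · rw [fo w h1 h2, fo x hxu hx]; ring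
      · simp
    by_cases hwu : w = u
    · subst hwu
      have : G.laplacian f w = - ((k : ℤ) + N.card) := by
        unfold Multigraph.laplacian
        have hsum : ∀ x, (G.mult w x : ℤ) * (f w - f x) =
            - ((if x = v then (k : ℤ) + 1 else 0) + (if x ∈ N.erase w then 1 else 0)) := by
          intro x
          rw [fu]
          rcases S.hcov x with rfl | h | h
          · have : x ∉ N.erase w := fun h => hvA ((memN x).1 (Finset.mem_of_mem_erase h)).1
            rw [fv, G.symm, part1 w hu]
            simp only [if_true, this, if_false]; push_cast; ring
          · have hxv := S.ne_v h
            by_cases hxN : x ∈ N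
            · by_cases hxw : x = w
              · subst hxw; simp [G.loopless, hxv]
              · have : x ∈ N.erase w := Finset.mem_erase.2 ⟨hxw, hxN⟩
                rw [fo x hxw (fun h => (Finset.mem_sdiff.1 h).2 hxN), part2 w hu x hxN (Ne.symm hxw)]
                simp only [hxv, this, if_true, if_false]; norm_num
            · have : x ∉ N.erase w := fun h => hxN (Finset.mem_of_mem_erase h)
              rw [fAN x (Finset.mem_sdiff.2 ⟨h, hxN⟩)]
              simp only [hxv, this, if_false]; norm_num
          · have h1 : x ≠ v := by rintro rfl; exact hvB h
            have h2 : x ∉ N.erase w :=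
              fun h' => S.hdisj x ((memN x).1 (Finset.mem_of_mem_erase h')).1 h
            rw [hnoedge w huA x h]
            simp only [h1, h2, if_false]; norm_num
        rw [Finset.sum_congr rfl (fun x _ => hsum x), Finset.sum_neg_distrib,
          Finset.sum_add_distrib, Finset.sum_ite_eq', Finset.sum_ite_mem, Finset.univ_inter,
          Finset.sum_const, Finset.card_erase_of_mem hu]
        have : 1 ≤ N.card := Finset.card_pos.2 ⟨w, hu⟩
        simp only [Finset.mem_univ, if_true, nsmul_eq_mul, mul_one]
        push_cast [this]; ring
      rw [this, S.hDA w huA, if_pos rfl]; ring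
    · rw [if_neg hwu]
      rcases S.hcov w with rfl | h | h
      · rw [if_neg hvAN, lapo w hwu hvAN (fun x hx => by rw [G.symm]; exact hnv x hx), S.hDv,
          part1 u hu]
        push_cast; ring
      · by_cases hwN : w ∈ N
        · have hwAN : w ∉ A \ N := fun h => (Finset.mem_sdiff.1 h).2 hwN
          rw [if_neg hwAN, lapo w hwu hwAN (fun x hx => by rw [G.symm]; exact hno x hx w hwN hwu),
            S.hDA w h, part2 w hwN u hu hwu]
          norm_num
        · have hwAN : w ∈ A \ N := Finset.mem_sdiff.2 ⟨h, hwN⟩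
          have : G.laplacian f w = 0 := by
            refine G.lap_zero_of f w (fAN w hwAN) fun x hx => ?_
            have hxu : x ≠ u := by rintro rfl; exact hx fu
            rcases S.hcov x with rfl | h' | h'
            · exact hnv w hwAN
            · refine hno w hwAN x ?_ hxu
              by_contra hxN
              exact hx (fAN x (Finset.mem_sdiff.2 ⟨h', hxN⟩))
            · exact hnoedge w h x h'
          rw [if_pos hwAN, this, S.hDA w h]; ring
      · have hwAN : w ∉ A \ N := fun h' => S.hdisj w (Finset.mem_sdiff.1 h').1 h
        rw [if_neg hwAN, lapo w hwu hwAN (fun x hx => by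
            rw [G.symm]; exact hnoedge x (Finset.mem_sdiff.1 hx).1 w h),
          S.hDB w h, G.symm, hnoedge u huA w h]
        norm_num
end

section
/- Let G be a gonality-tight graph with a vertex v such that the divisor D = v + Σ_{w∈V(G)} w realises the second gonality of G. Then G is a quasi-banana graph, and v is the vertex u_{0,1} in the quasi-banana structure (i.e. there is an isomorphism of G with some QB_m(N) carrying v to u_{0,1}). -/
open Finset

variable {V : Type*} [Fintype V] [DecidableEq V]

namespace QBProof

open Multigraph

/-- The divisor `v + ∑ w`. -/
def DD (v : V) : V → ℤ := fun w => (if w = v then 1 else 0) + 1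

/-- Single chip. -/
def chip (y : V) : V → ℤ := fun w => if w = y then 1 else 0

lemma lap_sum (G : Multigraph V) (f : V → ℤ) : ∑ w, G.laplacian f w = 0 := by
  unfold laplacian
  have h1 : ∑ w, ∑ u, (G.mult w u : ℤ) * (f w - f u)
      = ∑ w, ∑ u, (G.mult w u : ℤ) * (f u - f w) := by
    rw [Finset.sum_comm]
    refine Finset.sum_congr rfl fun w _ => Finset.sum_congr rfl fun u _ => ?_
    rw [G.symm u w]
  have h2 : ∑ w, ∑ u, (G.mult w u : ℤ) * (f u - f w)
      = - ∑ w, ∑ u, (G.mult w u : ℤ) * (f w - f u) := by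
    rw [← Finset.sum_neg_distrib]
    refine Finset.sum_congr rfl fun w _ => ?_
    rw [← Finset.sum_neg_distrib]
    refine Finset.sum_congr rfl fun u _ => ?_
    ring
  linarith

lemma lap_add (G : Multigraph V) (f g : V → ℤ) :
    G.laplacian (f + g) = G.laplacian f + G.laplacian g := by
  funext w
  simp only [laplacian, Pi.add_apply, ← Finset.sum_add_distrib]
  refine Finset.sum_congr rfl fun u _ => ?_
  ring

lemma lap_neg (G : Multigraph V) (f : V → ℤ) :
    G.laplacian (-f) = - G.laplacian f := by
  funext w
  simp only [laplacian, Pi.neg_apply, ← Finset.sum_neg_distrib]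
  refine Finset.sum_congr rfl fun u _ => ?_
  ring

lemma le_refl' (G : Multigraph V) (D : V → ℤ) : G.LinEquiv D D :=
  ⟨0, by funext w; simp [laplacian]⟩

lemma le_trans' {G : Multigraph V} {A B C : V → ℤ} (h : G.LinEquiv A B) (h' : G.LinEquiv B C) :
    G.LinEquiv A C := by
  obtain ⟨f, rfl⟩ := h
  obtain ⟨g, rfl⟩ := h'
  exact ⟨f + g, by rw [lap_add]; abel⟩

lemma le_symm' {G : Multigraph V} {A B : V → ℤ} (h : G.LinEquiv A B) :
    G.LinEquiv B A := by
  obtain ⟨f, rfl⟩ := h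
  exact ⟨-f, by rw [lap_neg]; abel⟩

lemma le_sub' {G : Multigraph V} {A B : V → ℤ} (C : V → ℤ) (h : G.LinEquiv A B) :
    G.LinEquiv (A - C) (B - C) := by
  obtain ⟨f, rfl⟩ := h
  exact ⟨f, by abel⟩

lemma win_degree {G : Multigraph V} {D : V → ℤ} (h : G.Winnable D) : 0 ≤ degree D := by
  obtain ⟨E, hE, f, rfl⟩ := h
  have h1 : ∑ w, (D - G.laplacian f) w = ∑ w, D w := by
    simp [Finset.sum_sub_distrib, lap_sum]
  unfold degree
  rw [← h1]
  exact Finset.sum_nonneg fun w _ => hE w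

lemma win_congr {G : Multigraph V} {D D' : V → ℤ} (h : G.LinEquiv D D') (h' : G.Winnable D') :
    G.Winnable D := by
  obtain ⟨E, hE, h2⟩ := h'
  exact ⟨E, hE, le_trans' h h2⟩

lemma win_eff {G : Multigraph V} {D : V → ℤ} (h : Effective D) : G.Winnable D :=
  ⟨D, h, le_refl' G D⟩

lemma win_mono {G : Multigraph V} {D D' : V → ℤ} (h : G.Winnable D) (h' : ∀ w, D w ≤ D' w) :
    G.Winnable D' := by
  obtain ⟨E, hE, f, rfl⟩ := h
  refine ⟨D' - G.laplacian f, fun w => ?_, f, rfl⟩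
  have := hE w
  have := h' w
  simp only [Pi.sub_apply] at *
  linarith

lemma chip_eff (y : V) : Effective (chip y) := by
  intro w; unfold chip; split_ifs <;> norm_num

lemma chip_deg (y : V) : degree (chip y) = 1 := by
  simp [degree, chip]

lemma deg_sub (A B : V → ℤ) : degree (A - B) = degree A - degree B := by
  simp [degree, Finset.sum_sub_distrib]

lemma deg_add (A B : V → ℤ) : degree (A + B) = degree A + degree B := by
  simp [degree, Finset.sum_add_distrib]

def RS (G : Multigraph V) (D : V → ℤ) : Set ℤ :=
  {r : ℤ | ∀ E : V → ℤ, Effective E → degree E = r → G.Winnable (fun w => D w - E w)}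

lemma rank_eq (G : Multigraph V) (D : V → ℤ) : G.rank D = sSup (RS G D) := rfl

lemma RS_nonempty (G : Multigraph V) (D : V → ℤ) : (RS G D).Nonempty := by
  refine ⟨-1, fun E hE hd => ?_⟩
  have : 0 ≤ degree E := Finset.sum_nonneg fun w _ => hE w
  omega

lemma RS_le (G : Multigraph V) (x : V) (D : V → ℤ) {r : ℤ} (hr : r ∈ RS G D) :
    r ≤ max (degree D) 0 := by
  by_contra hc
  push Not at hc
  have h0 : 0 < r := lt_of_le_of_lt (le_max_right _ _) hc
  have h1 : degree D < r := lt_of_le_of_lt (le_max_left _ _) hc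
  have hd : degree (r • chip x) = r := by
    simp [degree, chip]
  have := hr (r • chip x) (fun w => by
    have := chip_eff x w
    simp only [Pi.smul_apply, smul_eq_mul]; positivity) hd
  have h2 := win_degree this
  have h3 : degree (fun w => D w - (r • chip x) w) = degree D - r := by
    have := deg_sub D (r • chip x)
    rw [hd] at this
    exact this
  omega

lemma RS_bdd (G : Multigraph V) (x : V) (D : V → ℤ) : BddAbove (RS G D) :=
  ⟨_, fun _ hr => RS_le G x D hr⟩

lemma rank_mem (G : Multigraph V) (x : V) (D : V → ℤ) : G.rank D ∈ RS G D :=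
  Int.csSup_mem (RS_nonempty G D) (RS_bdd G x D)

lemma rank_ge (G : Multigraph V) (x : V) {D : V → ℤ} {r : ℤ} (h : r ∈ RS G D) : r ≤ G.rank D :=
  le_csSup (RS_bdd G x D) h

lemma exists_rank_one (G : Multigraph V) (x : V) : ∀ (n : ℕ) (D : V → ℤ),
    degree D ≤ n → 1 ≤ G.rank D → ∃ D', G.rank D' = 1 ∧ degree D' ≤ degree D := by
  intro n
  induction n with
  | zero =>
    intro D hD hr
    have := RS_le G x D (rank_mem G x D)
    have h2 : max (degree D) 0 = 0 := max_eq_right (by exact_mod_cast hD)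
    omega
  | succ n ih =>
    intro D hD hr
    by_cases h1 : G.rank D = 1
    · exact ⟨D, h1, le_rfl⟩
    have hm : G.rank D - 1 ∈ RS G (D - chip x) := by
      intro E hE hd
      have := rank_mem G x D (E + chip x) (fun w => by
        have := chip_eff x w
        have := hE w
        simp only [Pi.add_apply]; omega) (by rw [deg_add, chip_deg]; omega)
      convert this using 2
      simp only [Pi.sub_apply, Pi.add_apply]; ring
    have h2 := rank_ge G x hm
    have hdeg : degree (D - chip x) = degree D - 1 := by rw [deg_sub, chip_deg]
    obtain ⟨D', h3, h4⟩ := ih (D - chip x) (by push_cast at hD; omega) (by omega)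
    exact ⟨D', h3, by omega⟩

lemma deg_eff_one {E : V → ℤ} (hE : Effective E) (hd : degree E = 1) : ∃ x, 1 ≤ E x := by
  by_contra hc
  push Not at hc
  have : degree E ≤ 0 := Finset.sum_nonpos fun w _ => by have := hc w; omega
  omega

/-- A divisor of degree less than the first gonality misses some vertex. -/
lemma gon_one (G : Multigraph V) (v : V) (D : V → ℤ) (hd : degree D < G.gonality 1)
    (hw : ∀ x, G.Winnable (D - chip x)) : False := by
  have hm : (1 : ℤ) ∈ RS G D := by
    intro E hE hd
    obtain ⟨x, hx⟩ := deg_eff_one hE hd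
    have hle : ∀ w, E w ≤ chip x w := by
      intro w
      have h1 := Finset.sum_erase_add (Finset.univ) E (Finset.mem_univ x)
      have h2 : ∑ z ∈ Finset.univ.erase x, E z ≥ 0 := Finset.sum_nonneg fun w _ => hE w
      have h3 : ∑ z, E z = 1 := hd
      unfold chip
      split_ifs with h
      · subst h; omega
      · have : E w ≤ ∑ z ∈ Finset.univ.erase x, E z :=
          Finset.single_le_sum (f := E) (fun z _ => hE z) (Finset.mem_erase.2 ⟨h, Finset.mem_univ w⟩)
        omega
    refine win_mono (hw x) fun w => ?_
    have := hle w
    simp only [Pi.sub_apply]; omega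
  have hr := rank_ge G v hm
  obtain ⟨D', h1, h2⟩ := exists_rank_one G v (degree D).toNat D (Int.self_le_toNat _) hr
  have hg : G.gonality 1 ≤ degree D' := by
    refine csInf_le ⟨0, ?_⟩ ⟨D', h1, rfl⟩
    rintro d ⟨E, hE, rfl⟩
    have := RS_le G v E (rank_mem G v E)
    rw [hE] at this
    by_contra hc
    rw [max_eq_right (by omega)] at this
    omega
  omega

/-- `D` is equivalent to an effective divisor with two chips at `y` and one at `z`. -/
def PP (G : Multigraph V) (v y z : V) : Prop :=
  ∃ E : V → ℤ, Effective E ∧ G.LinEquiv (DD v) E ∧ 2 ≤ E y ∧ 1 ≤ E z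

/-- Extracted hypotheses. -/
structure Hyp (G : Multigraph V) (v : V) : Prop where
  conn : ∀ (F : Finset V) (a b : V), a ∈ F → b ∉ F → ∃ x ∈ F, ∃ y, y ∉ F ∧ 0 < G.mult x y
  win : ∀ w, G.Winnable (fun x => DD v x - 2 * chip w x)
  B : ∀ y z, y ≠ z → PP G v y z → PP G v z y → False
  Bv : ∀ E : V → ℤ, Effective E → G.LinEquiv (DD v) E → 3 ≤ E v → False

lemma DD_deg (v : V) : degree (DD v) = Fintype.card V + 1 := by
  simp [degree, DD, Finset.sum_add_distrib]; ring

lemma win_of_E {G : Multigraph V} {A E C : V → ℤ} (h : G.LinEquiv A E) (hC : ∀ w, C w ≤ E w) :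
    G.Winnable (A - C) :=
  ⟨E - C, fun w => by have := hC w; simp only [Pi.sub_apply]; omega, le_sub' C h⟩

lemma mkHyp (G : Multigraph V) (hG : G.Connected) (hGT : G.GonalityTight)
    (v : V) (hreal : G.Realises 2 (DD v)) : Hyp G v := by
  have hgon : G.gonality 1 = Fintype.card V := by
    have h1 := hreal.2
    rw [DD_deg] at h1
    unfold GonalityTight at hGT
    omega
  have key : ∀ y z, (∀ x, G.Winnable (DD v - chip y - chip z - chip x)) → False := by
    intro y z h
    refine gon_one G v _ ?_ h
    rw [deg_sub, deg_sub, chip_deg, chip_deg, DD_deg, hgon]; omega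
  have DD1 : ∀ x, 1 ≤ DD v x := by intro x; unfold DD; split_ifs <;> norm_num
  refine ⟨?_, ?_, ?_, ?_⟩
  · intro F a b ha hb
    by_contra hc
    push Not at hc
    have : ∀ c, Relation.ReflTransGen G.Adj a c → c ∈ F := by
      intro c h
      induction h with
      | refl => exact ha
      | tail _ h2 ih =>
        by_contra h3
        have h4 := hc _ ih _ h3
        unfold Adj at h2
        omega
    exact hb (this b (hG.2 a b))
  · intro w
    have h := rank_mem G v (DD v)
    rw [hreal.1] at h
    exact h (fun x => 2 * chip w x) (fun x => by have := chip_eff w x; positivity) (by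
      simp [degree, chip])
  · rintro y z hyz ⟨E, hE, hEl, h1, h2⟩ ⟨E', hE', hEl', h1', h2'⟩
    apply key y z
    intro x
    by_cases hx : x = y
    · subst hx
      have : DD v - chip x - chip z - chip x = DD v - (chip x + chip z + chip x) := by abel
      rw [this]
      refine win_of_E hEl fun w => ?_
      have := hE w
      simp only [Pi.add_apply, chip]
      split_ifs <;> subst_vars <;> first | omega | (exfalso; tauto)
    by_cases hx' : x = z
    · subst hx'
      have : DD v - chip y - chip x - chip x = DD v - (chip y + chip x + chip x) := by abel
      rw [this]
      refine win_of_E hEl' fun w => ?_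
      have := hE' w
      simp only [Pi.add_apply, chip]
      split_ifs <;> subst_vars <;> first | omega | (exfalso; tauto)
    · have : DD v - chip y - chip z - chip x = DD v - (chip y + chip z + chip x) := by abel
      rw [this]
      refine win_of_E (le_refl' G _) fun w => ?_
      have := DD1 w
      simp only [Pi.add_apply, chip]
      split_ifs <;> subst_vars <;> first | omega | (exfalso; tauto)
  · intro E hE hEl h3
    apply key v v
    intro x
    have : DD v - chip v - chip v - chip x = DD v - (chip v + chip v + chip x) := by abel
    rw [this]
    by_cases hx : x = v
    · subst hx
      refine win_of_E hEl fun w => ?_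
      have := hE w
      simp only [Pi.add_apply, chip]
      split_ifs <;> subst_vars <;> omega
    · refine win_of_E (le_refl' G _) fun w => ?_
      simp only [Pi.add_apply, chip, DD]
      split_ifs <;> subst_vars <;> first | omega | (exfalso; tauto)

/-- Result of firing the set `F`. -/
def fire (G : Multigraph V) (A : V → ℤ) (F : Finset V) : V → ℤ := fun x =>
  if x ∈ F then A x - ∑ u ∈ Fᶜ, (G.mult x u : ℤ) else A x + ∑ u ∈ F, (G.mult x u : ℤ)

lemma fire_equiv (G : Multigraph V) (A : V → ℤ) (F : Finset V) : G.LinEquiv A (fire G A F) := by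
  refine ⟨fun x => if x ∈ F then 1 else 0, ?_⟩
  funext x
  simp only [fire, Pi.sub_apply, laplacian]
  rw [← Finset.sum_add_sum_compl F]
  have h1 : ∑ i ∈ F, (G.mult x i : ℤ) * ((if x ∈ F then (1:ℤ) else 0) - if i ∈ F then 1 else 0)
      = if x ∈ F then 0 else - ∑ i ∈ F, (G.mult x i : ℤ) := by
    split_ifs with hx
    · refine Finset.sum_eq_zero fun i hi => ?_
      simp [hi]
    · rw [← Finset.sum_neg_distrib]
      refine Finset.sum_congr rfl fun i hi => ?_
      simp [hi]
  have h2 : ∑ i ∈ Fᶜ, (G.mult x i : ℤ) * ((if x ∈ F then (1:ℤ) else 0) - if i ∈ F then 1 else 0)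
      = if x ∈ F then ∑ i ∈ Fᶜ, (G.mult x i : ℤ) else 0 := by
    split_ifs with hx
    · refine Finset.sum_congr rfl fun i hi => ?_
      simp [Finset.mem_compl.1 hi]
    · refine Finset.sum_eq_zero fun i hi => ?_
      simp [Finset.mem_compl.1 hi]
  rw [h1, h2]
  split_ifs <;> ring

def Legal (G : Multigraph V) (A : V → ℤ) (F : Finset V) : Prop :=
  ∀ x ∈ F, ∑ u ∈ Fᶜ, (G.mult x u : ℤ) ≤ A x

lemma fire_eff {G : Multigraph V} {A : V → ℤ} {F : Finset V} (hA : Effective A)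
    (hF : Legal G A F) : Effective (fire G A F) := by
  intro x
  unfold fire
  split_ifs with h
  · have := hF x h; omega
  · have := hA x
    have : 0 ≤ ∑ u ∈ F, (G.mult x u : ℤ) := Finset.sum_nonneg fun _ _ => by positivity
    omega

lemma fire_ge {G : Multigraph V} (A : V → ℤ) {F : Finset V} {y : V} (hy : y ∉ F) :
    A y ≤ fire G A F y := by
  unfold fire
  rw [if_neg hy]
  have : 0 ≤ ∑ u ∈ F, (G.mult y u : ℤ) := Finset.sum_nonneg fun _ _ => by positivity
  omega

lemma fire_gt {G : Multigraph V} (A : V → ℤ) {F : Finset V} {x y : V} (hy : y ∉ F) (hx : x ∈ F)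
    (h : 0 < G.mult x y) : A y + 1 ≤ fire G A F y := by
  unfold fire
  rw [if_neg hy]
  have : (G.mult y x : ℤ) ≤ ∑ u ∈ F, (G.mult y u : ℤ) :=
    Finset.single_le_sum (f := fun u => (G.mult y u : ℤ)) (fun _ _ => by positivity) hx
  rw [G.symm x y] at h
  omega

lemma dhar {G : Multigraph V} {A : V → ℤ} {w : V} (hw : A w ≤ 1)
    (hwin : G.Winnable (fun x => A x - 2 * chip w x)) :
    ∃ F : Finset V, F.Nonempty ∧ w ∉ F ∧ Legal G A F := by
  obtain ⟨E, hE, f, rfl⟩ := hwin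
  obtain ⟨a, _, ha⟩ := Finset.exists_max_image Finset.univ f ⟨w, Finset.mem_univ w⟩
  have ha' : ∀ x, f x ≤ f a := fun x => ha x (Finset.mem_univ x)
  refine ⟨Finset.univ.filter fun x => f x = f a, ⟨a, by simp⟩, ?_, ?_⟩
  · intro h
    have h1 : f w = f a := by simpa using h
    have h2 := hE w
    simp only [Pi.sub_apply, chip, if_true] at h2
    have h3 : 0 ≤ G.laplacian f w := Finset.sum_nonneg fun u _ => by
      have := ha' u
      exact mul_nonneg (by positivity) (by omega)
    omega
  · intro x hx
    have h1 : f x = f a := by simpa using hx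
    have h2 := hE x
    have h4 := chip_eff w x
    simp only [Pi.sub_apply] at h2
    have h3 : ∑ u ∈ (Finset.univ.filter fun x => f x = f a)ᶜ, (G.mult x u : ℤ)
        ≤ G.laplacian f x := by
      unfold laplacian
      refine le_trans (Finset.sum_le_sum (g := fun u => (G.mult x u : ℤ) * (f x - f u)) ?_)
        (Finset.sum_le_sum_of_subset_of_nonneg (Finset.subset_univ _) ?_)
      · intro u hu
        have h5 : f u ≠ f a := by simpa using hu
        have h6 := ha' u
        have h7 : 1 ≤ f x - f u := by omega
        have h8 : (0 : ℤ) ≤ G.mult x u := by positivity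
        nlinarith
      · intro u _ _
        have := ha' u
        exact mul_nonneg (by positivity) (by omega)
    omega

/-- All chips of `S` concentrated at `u`. -/
def DS (S : Finset V) (u : V) : V → ℤ := fun x =>
  if x = u then (S.card : ℤ) + 1 else if x ∈ S then 0 else 1

lemma DS_eff (S : Finset V) (u : V) : Effective (DS S u) := by
  intro x; unfold DS; split_ifs <;> positivity

structure Inv (G : Multigraph V) (v : V) (S T : Finset V) : Prop where
  sub : T ⊆ S
  ne : T.Nonempty
  vS : v ∈ S
  eqv : ∀ u ∈ T, G.LinEquiv (DD v) (DS S u)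
  out : ∀ s ∈ S, s ∉ T → ∀ x, x ∉ S → G.mult s x = 0
  pp : ∀ y ∈ S, ∀ w, w ∉ S → PP G v y w
  con : ∀ (F : Finset V) (a b : V), a ∈ F → a ∈ S → b ∉ F → b ∈ S →
    ∃ x ∈ F, x ∈ S ∧ ∃ y, y ∉ F ∧ y ∈ S ∧ 0 < G.mult x y

lemma DD_eff (v : V) : Effective (DD v) := by
  intro x; unfold DD; split_ifs <;> norm_num

lemma PP_v (G : Multigraph V) {v z : V} (hz : z ≠ v) : PP G v v z :=
  ⟨DD v, DD_eff v, le_refl' G _, by simp [DD], by simp [DD, hz]⟩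

lemma L1a {G : Multigraph V} {v : V} (H : Hyp G v) {F : Finset V} (hne : F.Nonempty)
    (hv : v ∉ F) (hF : Legal G (DD v) F) : False := by
  obtain ⟨a, ha⟩ := hne
  obtain ⟨x, hx, y, hy, hxy⟩ := H.conn F a v ha hv
  have h1 := fire_gt (DD v) hy hx hxy
  have h2 := fire_ge (G := G) (DD v) hv
  have he := fire_eff (DD_eff v) hF
  have hl := fire_equiv G (DD v) F
  by_cases hyv : y = v
  · subst hyv
    exact H.Bv _ he hl (by simp [DD] at h1; omega)
  · refine H.B v y (Ne.symm hyv) (PP_v G hyv) ⟨_, he, hl, ?_, ?_⟩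
    · simp [DD, hyv] at h1; omega
    · simp [DD] at h2; omega

lemma exF {G : Multigraph V} {v : V} (H : Hyp G v) {S T : Finset V} (I : Inv G v S T)
    {u w : V} (hu : u ∈ T) (hw : w ∉ S) :
    ∃ F : Finset V, w ∉ F ∧ u ∈ F ∧ Legal G (DS S u) F := by
  have hwu : w ≠ u := fun h => hw (h ▸ I.sub hu)
  have hwin : G.Winnable (fun x => DS S u x - 2 * chip w x) :=
    win_congr (le_sub' (fun x => 2 * chip w x) (le_symm' (I.eqv u hu))) (H.win w)
  obtain ⟨F, hne, hwF, hF⟩ := dhar (by simp [DS, hwu, hw]) hwin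
  refine ⟨F, hwF, ?_, hF⟩
  by_contra huF
  by_cases hS : ∃ a ∈ F, a ∈ S
  · obtain ⟨a, haF, haS⟩ := hS
    obtain ⟨x, hx, hxS, y, hy, hyS, hxy⟩ := I.con F a u haF haS huF (I.sub hu)
    have h1 := hF x hx
    have h2 : (G.mult x y : ℤ) ≤ ∑ u ∈ Fᶜ, (G.mult x u : ℤ) :=
      Finset.single_le_sum (f := fun u => (G.mult x u : ℤ)) (fun _ _ => by positivity)
        (Finset.mem_compl.2 hy)
    have hxu : x ≠ u := fun h => huF (h ▸ hx)
    have h3 : DS S u x = 0 := by simp [DS, hxu, hxS]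
    omega
  · push Not at hS
    refine L1a H hne (fun h => hS v h I.vS) fun x hx => le_trans (hF x hx) ?_
    have hxS := hS x hx
    have hxu : x ≠ u := fun h => huF (h ▸ hx)
    simp only [DS, hxu, hxS, DD, if_false]
    split_ifs <;> norm_num

/-- Package describing a firing set with single outside neighbour `w`. -/
structure Pk (G : Multigraph V) (v : V) (S : Finset V) (u w : V) (F : Finset V) : Prop where
  nmem : w ∉ F
  sub : S ⊆ F
  closed : ∀ y, y ∉ F → ∀ x ∈ F, 0 < G.mult x y → y = w
  mu : G.mult u w = S.card + 1
  ms : ∀ s ∈ S, s ≠ u → G.mult s w = 0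
  mx : ∀ x ∈ F, x ∉ S → G.mult x w ≤ 1
  pp : ∀ x ∈ F, x ∉ S → G.mult x w = 0 → PP G v w x

lemma outdeg_closed {G : Multigraph V} {F : Finset V} {w x : V} (hw : w ∉ F) (hx : x ∈ F)
    (hcl : ∀ y, y ∉ F → ∀ x ∈ F, 0 < G.mult x y → y = w) :
    ∑ u ∈ Fᶜ, (G.mult x u : ℤ) = G.mult x w := by
  refine Finset.sum_eq_single_of_mem w (Finset.mem_compl.2 hw) fun y hy hyw => ?_
  by_contra h
  exact hyw (hcl y (Finset.mem_compl.1 hy) x hx (by omega))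

lemma L2 {G : Multigraph V} {v : V} (H : Hyp G v) {S T : Finset V} (I : Inv G v S T)
    {u z x0 : V} (hu : u ∈ T) {F : Finset V} (huF : u ∈ F) (hF : Legal G (DS S u) F)
    (hzF : z ∉ F) (hzS : z ∉ S) (hx0 : x0 ∈ F) (hxz : 0 < G.mult x0 z) : Pk G v S u z F := by
  have hzu : z ≠ u := fun h => hzS (h ▸ I.sub hu)
  have he := fire_eff (DS_eff S u) hF
  have hl := le_trans' (I.eqv u hu) (fire_equiv G (DS S u) F)
  have hz2 : 2 ≤ fire G (DS S u) F z := by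
    have := fire_gt (DS S u) hzF hx0 hxz
    simp [DS, hzu, hzS] at this
    omega
  have hcl : ∀ y, y ∉ F → ∀ x ∈ F, 0 < G.mult x y → y = z := by
    intro y hy x hx hxy
    by_contra hyz
    have h1 := fire_gt (DS S u) hy hx hxy
    have h0 := DS_eff S u y
    refine H.B z y (Ne.symm hyz) ⟨_, he, hl, hz2, by omega⟩ ?_
    by_cases hyS : y ∈ S
    · exact I.pp y hyS z hzS
    · have hyu : y ≠ u := fun h => hyS (h ▸ I.sub hu)
      refine ⟨_, he, hl, ?_, by omega⟩
      simp [DS, hyu, hyS] at h1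
      omega
  have hval : ∀ x ∈ F, fire G (DS S u) F x = DS S u x - G.mult x z := by
    intro x hx
    simp only [fire, if_pos hx, outdeg_closed hzF hx hcl]
  have hleg : ∀ x ∈ F, (G.mult x z : ℤ) ≤ DS S u x := by
    intro x hx
    rw [← outdeg_closed hzF hx hcl]
    exact hF x hx
  have hsub : S ⊆ F := by
    intro b hb
    by_contra hbF
    obtain ⟨x, hx, hxS, y, hy, hyS, hxy⟩ := I.con F u b huF (I.sub hu) hbF hb
    exact hzS (hcl y hy x hx hxy ▸ hyS)
  refine ⟨hzF, hsub, hcl, ?_, ?_, ?_, ?_⟩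
  · have h1 := hleg u huF
    have h2 := hval u huF
    simp [DS] at h1 h2
    by_contra hc
    refine H.B z u hzu ⟨_, he, hl, hz2, ?_⟩ (I.pp u (I.sub hu) z hzS)
    omega
  · intro s hs hsu
    have h1 := hleg s (hsub hs)
    simp [DS, hsu, hs] at h1
    omega
  · intro x hx hxS
    have hxu : x ≠ u := fun h => hxS (h ▸ I.sub hu)
    have h1 := hleg x hx
    simp [DS, hxu, hxS] at h1
    omega
  · intro x hx hxS h0
    have hxu : x ≠ u := fun h => hxS (h ▸ I.sub hu)
    refine ⟨_, he, hl, hz2, ?_⟩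
    rw [hval x hx]
    simp [DS, hxu, hxS, h0]

/-- for `w` an outside neighbour of `u` -/
lemma L3 {G : Multigraph V} {v : V} (H : Hyp G v) {S T : Finset V} (I : Inv G v S T)
    {u w : V} (hu : u ∈ T) (hw : w ∉ S) (huw : 0 < G.mult u w) : ∃ F, Pk G v S u w F := by
  obtain ⟨F, h1, h2, h3⟩ := exF H I hu hw
  exact ⟨F, L2 H I hu h2 h3 h1 hw h2 huw⟩

lemma L3clique {G : Multigraph V} {v : V} (H : Hyp G v) {S T : Finset V} (I : Inv G v S T)
    {u w w' : V} (hu : u ∈ T) (hw : w ∉ S) (huw : 0 < G.mult u w) (hw' : w' ∉ S)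
    (huw' : 0 < G.mult u w') (hne : w ≠ w') : G.mult w w' = 1 := by
  obtain ⟨F, P⟩ := L3 H I hu hw huw
  obtain ⟨F', P'⟩ := L3 H I hu hw' huw'
  have h1 : w' ∈ F := by
    by_contra h
    exact hne (P.closed w' h u (P.sub (I.sub hu)) huw').symm
  have h2 : w ∈ F' := by
    by_contra h
    exact hne (P'.closed w h u (P'.sub (I.sub hu)) huw)
  have h3 := P'.mx w h2 hw
  by_contra h4
  have h5 : G.mult w w' = 0 := by omega
  exact H.B w w' hne (P.pp w' h1 hw' (by rw [G.symm]; exact h5)) (P'.pp w h2 hw h5)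

lemma L4 {G : Multigraph V} {v : V} (H : Hyp G v) {S T : Finset V} (I : Inv G v S T)
    {u w x : V} (hu : u ∈ T) (hw : w ∉ S) (huw : 0 < G.mult u w) (hx : x ∉ S)
    (hux : G.mult u x = 0) (hwx : 0 < G.mult w x) : ∃ F, Pk G v S u w F ∧ x ∉ F := by
  obtain ⟨F, h1, h2, h3⟩ := exF H I hu hx
  by_cases hwF : w ∈ F
  · have P := L2 H I hu h2 h3 h1 hx hwF hwx
    have := P.mu
    omega
  · exact ⟨F, L2 H I hu h2 h3 hwF hw h2 huw, h1⟩

lemma L5 {G : Multigraph V} {v : V} (H : Hyp G v) {S T : Finset V} (I : Inv G v S T)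
    {u w s x : V} (hu : u ∈ T) (hw : w ∉ S) (huw : 0 < G.mult u w) (hs : s ∈ S) (hx : x ∉ S)
    (hsu : s ≠ u) : G.mult s x = 0 := by
  by_cases hsT : s ∈ T
  swap
  · exact I.out s hs hsT x hx
  by_contra hsx
  have hsx' : 0 < G.mult s x := by omega
  obtain ⟨F, P⟩ := L3 H I hu hw huw
  obtain ⟨F', P'⟩ := L3 H I hsT hx hsx'
  have hux : G.mult u x = 0 := P'.ms u (I.sub hu) hsu.symm
  have hsw : G.mult s w = 0 := P.ms s hs hsu
  have hwx : w ≠ x := by rintro rfl; omega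
  have h0 : G.mult w x = 0 := by
    by_contra h
    obtain ⟨F2, P2, hx2⟩ := L4 H I hu hw huw hx hux (by omega)
    exact hwx (P2.closed x hx2 s (P2.sub hs) hsx').symm
  have h1 : x ∈ F := by
    by_contra h
    exact hwx (P.closed x h s (P.sub hs) hsx').symm
  have h2 : w ∈ F' := by
    by_contra h
    exact hwx (P'.closed w h u (P'.sub (I.sub hu)) huw)
  exact H.B w x hwx (P.pp x h1 hx (by rw [G.symm]; exact h0)) (P'.pp w h2 hw h0)

lemma L6 {G : Multigraph V} {v : V} (H : Hyp G v) {S T : Finset V} (I : Inv G v S T)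
    {u w : V} (hu : u ∈ T) (hw : w ∉ S) (huw : 0 < G.mult u w) (C : Finset V)
    (hC : ∀ x, x ∈ C ↔ x ∉ S ∧ 0 < G.mult u x) : G.LinEquiv (DD v) (DS (S ∪ C) w) := by
  classical
  obtain ⟨F, P⟩ := L3 H I hu hw huw
  set K : Finset V := Finset.univ.filter fun z => ∀ F, Pk G v S u w F → z ∈ F with hK
  have hKm : ∀ z, z ∈ K ↔ ∀ F, Pk G v S u w F → z ∈ F := by intro z; simp [hK]
  have hwK : w ∉ K := fun h => P.nmem ((hKm w).1 h F P)
  have hSK : S ⊆ K := fun s hs => (hKm s).2 fun F P => P.sub hs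
  have hwC : w ∈ C := (hC w).2 ⟨hw, huw⟩
  have huS := I.sub hu
  have hCK : ∀ x ∈ C, x ≠ w → x ∈ K := by
    intro x hx hxw
    refine (hKm x).2 fun F P => ?_
    by_contra h
    exact hxw (P.closed x h u (P.sub huS) ((hC x).1 hx).2)
  have hcl : ∀ y, y ∉ K → ∀ x ∈ K, 0 < G.mult x y → y = w := by
    intro y hy x hx hxy
    rw [hKm] at hy
    push Not at hy
    obtain ⟨F1, P1, hy1⟩ := hy
    exact P1.closed y hy1 x ((hKm x).1 hx F1 P1) hxy
  have hoth : ∀ x ∈ K, x ∉ S → x ∉ C → G.mult x w = 0 := by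
    intro x hx hxS hxC
    by_contra h
    have hux : G.mult u x = 0 := by
      by_contra h2
      exact hxC ((hC x).2 ⟨hxS, by omega⟩)
    obtain ⟨F2, P2, hx2⟩ := L4 H I hu hw huw hxS hux (by rw [G.symm]; omega)
    exact hx2 ((hKm x).1 hx F2 P2)
  have hdis : Disjoint S C := Finset.disjoint_left.2 fun x hx hxC => ((hC x).1 hxC).1 hx
  have hfire : fire G (DS S u) K = DS (S ∪ C) w := by
    funext x
    by_cases hxw : x = w
    · subst hxw
      have hxu : x ≠ u := fun h => hw (h ▸ huS)
      simp only [fire, if_neg hwK, DS, if_neg hxu, if_neg hw, if_true]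
      have hsub : (S ∪ C.erase x) ⊆ K := by
        intro z hz
        rcases Finset.mem_union.1 hz with h | h
        · exact hSK h
        · exact hCK z (Finset.mem_of_mem_erase h) (Finset.ne_of_mem_erase h)
      rw [← Finset.sum_subset hsub, Finset.sum_union, Finset.card_union_of_disjoint hdis]
      · have e1 : ∑ z ∈ S, (G.mult x z : ℤ) = S.card + 1 := by
          rw [Finset.sum_eq_single_of_mem u huS]
          · rw [G.symm, P.mu]; push_cast; rfl
          · intro s hs hsu
            rw [G.symm, P.ms s hs hsu]; rfl
        have e2 : ∑ z ∈ C.erase x, (G.mult x z : ℤ) = (C.erase x).card := by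
          rw [Finset.card_eq_sum_ones]
          push_cast
          refine Finset.sum_congr rfl fun z hz => ?_
          have hz1 := (hC z).1 (Finset.mem_of_mem_erase hz)
          rw [L3clique H I hu hw huw hz1.1 hz1.2 (Finset.ne_of_mem_erase hz).symm]; rfl
        have e3 := Finset.card_erase_add_one hwC
        rw [e1, e2]
        push_cast
        omega
      · exact hdis.mono_right (Finset.erase_subset _ _)
      · intro z hz hz2
        rw [G.symm]
        simp only [Finset.mem_union, Finset.mem_erase, not_or, not_and] at hz2
        have hzx : z ≠ x := fun h => hwK (h ▸ hz)
        rw [hoth z hz hz2.1 (hz2.2 hzx)]; rfl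
    · by_cases hxK : x ∈ K
      · simp only [fire, if_pos hxK, outdeg_closed hwK hxK hcl, DS, if_neg hxw]
        by_cases hxu : x = u
        · subst hxu
          simp [huS, P.mu]
        · by_cases hxS : x ∈ S
          · simp [hxu, hxS, P.ms x hxS hxu]
          · by_cases hxC : x ∈ C
            · have := (hC x).1 hxC
              simp [hxu, hxS, hxC, L3clique H I hu this.1 this.2 hw huw hxw]
            · simp [hxu, hxS, hxC, hoth x hxK hxS hxC]
      · have hxS : x ∉ S := fun h => hxK (hSK h)
        have hxC : x ∉ C := fun h => hxK (hCK x h hxw)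
        have hxu : x ≠ u := fun h => hxS (h ▸ huS)
        have : ∑ z ∈ K, (G.mult x z : ℤ) = 0 := by
          refine Finset.sum_eq_zero fun z hz => ?_
          by_contra h
          exact hxw (hcl x hxK z hz (by rw [G.symm]; omega))
        simp [fire, hxK, DS, hxw, hxS, hxC, hxu, this]
  rw [← hfire]
  exact le_trans' (I.eqv u hu) (fire_equiv G _ K)

lemma Inv_step {G : Multigraph V} {v : V} (H : Hyp G v) {S T : Finset V} (I : Inv G v S T)
    {u : V} (hu : u ∈ T) (C : Finset V) (hne : C.Nonempty)
    (hC : ∀ x, x ∈ C ↔ x ∉ S ∧ 0 < G.mult u x) : Inv G v (S ∪ C) C := by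
  have huS := I.sub hu
  refine ⟨Finset.subset_union_right, hne, Finset.mem_union_left _ I.vS, ?_, ?_, ?_, ?_⟩
  · intro w hw
    have := (hC w).1 hw
    exact L6 H I hu this.1 this.2 C hC
  · intro s hs hsC x hx
    have hsS : s ∈ S := by
      rcases Finset.mem_union.1 hs with h | h
      · exact h
      · exact absurd h hsC
    simp only [Finset.mem_union, not_or] at hx
    by_cases hsu : s = u
    · subst hsu
      by_contra h
      exact hx.2 ((hC x).2 ⟨hx.1, by omega⟩)
    · obtain ⟨w, hw⟩ := hne
      have := (hC w).1 hw
      exact L5 H I hu this.1 this.2 hsS hx.1 hsu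
  · intro y hy w hw
    have hw' := hw
    simp only [Finset.mem_union, not_or] at hw
    rcases Finset.mem_union.1 hy with h | h
    · exact I.pp y h w hw.1
    · have h1 := (hC y).1 h
      refine ⟨_, DS_eff (S ∪ C) y, L6 H I hu h1.1 h1.2 C hC, ?_, ?_⟩
      · have : 0 < (S ∪ C).card := Finset.card_pos.2 ⟨y, hy⟩
        simp only [DS, if_true]; omega
      · have hwy : w ≠ y := fun e => hw' (e ▸ hy)
        simp [DS, hwy, hw]
  · intro F a b haF ha hbF hb
    by_contra hc
    push Not at hc
    by_cases huF : u ∈ F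
    · have hbS : b ∈ S := by
        rcases Finset.mem_union.1 hb with h | h
        · exact h
        · have := hc u huF (Finset.mem_union_left _ huS) b hbF hb
          have := ((hC b).1 h).2
          omega
      obtain ⟨x, hx, hxS, y, hy, hyS, hxy⟩ := I.con F u b huF huS hbF hbS
      have := hc x hx (Finset.mem_union_left _ hxS) y hy (Finset.mem_union_left _ hyS)
      omega
    · have haS : a ∈ S := by
        rcases Finset.mem_union.1 ha with h | h
        · exact h
        · have := hc a haF ha u huF (Finset.mem_union_left _ huS)
          have := ((hC a).1 h).2
          rw [G.symm] at this
          omega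
      obtain ⟨x, hx, hxS, y, hy, hyS, hxy⟩ := I.con F a u haF haS huF huS
      have := hc x hx (Finset.mem_union_left _ hxS) y hy (Finset.mem_union_left _ hyS)
      omega

structure LInv (G : Multigraph V) (v : V) (m : ℕ) (L : V → ℕ) (c : ℕ → V) (S T : Finset V) :
    Prop where
  inv : Inv G v S T
  memS : ∀ x, x ∈ S ↔ L x ≤ m
  memT : ∀ x, x ∈ T ↔ L x = m
  L0 : ∀ x, L x = 0 ↔ x = v
  cL : ∀ i, i < m → L (c i) = i
  mul : ∀ x y, x ≠ y → x ∈ S → y ∈ S → L x ≤ L y → G.mult x y =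
    if L x = L y then 1
    else if L x + 1 = L y ∧ x = c (L x) then (Finset.univ.filter fun z => L z ≤ L x).card + 1
    else 0

lemma LInv_base (G : Multigraph V) (v : V) :
    LInv G v 0 (fun x => if x = v then 0 else 1) (fun _ => v) {v} {v} := by
  refine ⟨⟨subset_rfl, ⟨v, by simp⟩, by simp, ?_, ?_, ?_, ?_⟩, ?_, ?_, ?_, ?_, ?_⟩
  · intro u hu
    rw [Finset.mem_singleton] at hu
    subst hu
    have : DS {u} u = DD u := by
      funext x
      by_cases h : x = u <;> simp [DS, DD, h]
    rw [this]
    exact le_refl' G _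
  · intro s hs hs'; exact absurd hs hs'
  · intro y hy w hw
    rw [Finset.mem_singleton] at hy hw
    subst hy
    exact PP_v G hw
  · intro F a b ha ha' hb hb'
    rw [Finset.mem_singleton] at ha' hb'
    subst ha' hb'
    exact absurd ha hb
  · intro x; by_cases h : x = v <;> simp [h]
  · intro x; by_cases h : x = v <;> simp [h]
  · intro x; by_cases h : x = v <;> simp [h]
  · intro i hi; omega
  · intro x y hxy hx hy
    rw [Finset.mem_singleton] at hx hy
    exact absurd (hx.trans hy.symm) hxy

lemma LInv_step {G : Multigraph V} {v : V} (H : Hyp G v) {m : ℕ} {L : V → ℕ} {c : ℕ → V}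
    {S T : Finset V} (I : LInv G v m L c S T) {b : V} (hb : b ∉ S) :
    ∃ L' c' S' T', LInv G v (m + 1) L' c' S' T' ∧ S ⊂ S' := by
  classical
  obtain ⟨u, huS, y, hyS, huy⟩ := H.conn S v b I.inv.vS hb
  have hu : u ∈ T := by
    by_contra h
    have := I.inv.out u huS h y hyS
    omega
  have hLu : L u = m := (I.memT u).1 hu
  set C : Finset V := Finset.univ.filter fun x => x ∉ S ∧ 0 < G.mult u x with hCdef
  have hC : ∀ x, x ∈ C ↔ x ∉ S ∧ 0 < G.mult u x := by intro x; simp [hCdef]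
  have hyC : y ∈ C := (hC y).2 ⟨hyS, huy⟩
  have hI := Inv_step H I.inv hu C ⟨y, hyC⟩ hC
  set L' : V → ℕ := fun x => if x ∈ S then L x else if x ∈ C then m + 1 else m + 2 with hL'
  have LS : ∀ x ∈ S, L' x = L x := fun x hx => by simp [hL', hx]
  have LC : ∀ x ∈ C, L' x = m + 1 := fun x hx => by simp [hL', hx, ((hC x).1 hx).1]
  have LN : ∀ x, x ∉ S → m + 1 ≤ L' x := fun x hx => by
    simp only [hL', if_neg hx]; split_ifs <;> omega
  have LN2 : ∀ x, x ∉ S → x ∉ C → L' x = m + 2 := fun x hx hxC => by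
    simp [hL', hx, hxC]
  have hcard : ∀ i, i ≤ m → (Finset.univ.filter fun z => L' z ≤ i)
      = (Finset.univ.filter fun z => L z ≤ i) := by
    intro i hi
    ext z
    simp only [Finset.mem_filter, Finset.mem_univ, true_and]
    by_cases hz : z ∈ S
    · rw [LS z hz]
    · have h1 := LN z hz
      have h2 := (I.memS z).not.1 hz
      omega
  refine ⟨L', fun i => if i = m then u else c i, S ∪ C, C, ⟨hI, ?_, ?_, ?_, ?_, ?_⟩, ?_⟩
  · intro x
    rw [Finset.mem_union]
    by_cases hx : x ∈ S
    · have := (I.memS x).1 hx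
      have := LS x hx
      simp only [hx, true_or, true_iff]; omega
    · by_cases hxC : x ∈ C
      · simp [hxC, LC x hxC]
      · simp [hx, hxC, LN2 x hx hxC]
  · intro x
    by_cases hx : x ∈ S
    · have h1 := (I.memS x).1 hx
      have h2 := LS x hx
      have h3 : x ∉ C := fun h => ((hC x).1 h).1 hx
      simp only [h3, false_iff]; omega
    · by_cases hxC : x ∈ C
      · simp [hxC, LC x hxC]
      · simp [hxC, LN2 x hx hxC]
  · intro x
    by_cases hx : x ∈ S
    · rw [LS x hx, I.L0]
    · have h1 := LN x hx
      have h2 : x ≠ v := fun h => hx (h ▸ I.inv.vS)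
      simp only [h2, iff_false]; omega
  · intro i hi
    by_cases him : i = m
    · simp only [him, if_true]; rw [LS u huS, hLu]
    · simp only [him, if_false]
      have h1 := I.cL i (by omega)
      rw [LS _ ((I.memS _).2 (by omega)), h1]
  · intro x z hxz hx hz hle
    rw [Finset.mem_union] at hx hz
    by_cases hxS : x ∈ S
    · have hxm := (I.memS x).1 hxS
      by_cases hzS : z ∈ S
      · have hzm := (I.memS z).1 hzS
        rw [LS x hxS, LS z hzS] at hle
        rw [I.mul x z hxz hxS hzS hle, LS x hxS, LS z hzS, hcard _ hxm]
        by_cases h1 : L x + 1 = L z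
        · have h2 : L x ≠ m := by omega
          simp only [if_neg h2]
        · simp only [h1, false_and, if_false]
      · have hzC : z ∈ C := by tauto
        have hz' := (hC z).1 hzC
        obtain ⟨F, P⟩ := L3 H I.inv hu hz'.1 hz'.2
        rw [LS x hxS, LC z hzC, hcard _ hxm, if_neg (by omega)]
        by_cases hxu : x = u
        · subst hxu
          have hS : S = Finset.univ.filter fun z => L z ≤ m := by
            ext z; simp [I.memS]
          rw [P.mu, hLu]
          simp only [if_true, and_self]
          rw [← hS]
        · rw [P.ms x hxS hxu, if_neg]
          rintro ⟨h1, h2⟩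
          have h3 : L x = m := by omega
          simp only [h3, if_true] at h2
          exact hxu h2
    · have hxC : x ∈ C := by tauto
      by_cases hzS : z ∈ S
      · have hzm := (I.memS z).1 hzS
        rw [LC x hxC, LS z hzS] at hle
        omega
      · have hzC : z ∈ C := by tauto
        have hz' := (hC z).1 hzC
        have hx' := (hC x).1 hxC
        rw [LC x hxC, LC z hzC, if_pos rfl]
        exact L3clique H I.inv hu hx'.1 hx'.2 hz'.1 hz'.2 hxz
  · refine Finset.ssubset_iff_subset_ne.2 ⟨Finset.subset_union_left, fun h => hyS ?_⟩
    rw [h]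
    exact Finset.mem_union_right _ hyC

lemma LInv_final {G : Multigraph V} {v : V} (H : Hyp G v) : ∀ (n : ℕ) {m : ℕ} {L : V → ℕ}
    {c : ℕ → V} {S T : Finset V}, LInv G v m L c S T → Sᶜ.card ≤ n →
    ∃ m L c T, LInv G v m L c Finset.univ T := by
  intro n
  induction n with
  | zero =>
    intro m L c S T I h
    have : S = Finset.univ := by
      have h1 : Sᶜ = ∅ := Finset.card_eq_zero.1 (by omega)
      simpa using h1
    subst this
    exact ⟨m, L, c, T, I⟩
  | succ n ih =>
    intro m L c S T I h
    by_cases hS : S = Finset.univ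
    · subst hS
      exact ⟨m, L, c, T, I⟩
    · obtain ⟨b, hb⟩ : ∃ b, b ∉ S := by
        by_contra hc
        push Not at hc
        exact hS (Finset.eq_univ_iff_forall.2 hc)
      obtain ⟨L', c', S', T', I', hlt⟩ := LInv_step H I hb
      refine ih I' ?_
      have h1 := Finset.card_lt_card hlt
      rw [Finset.card_compl] at *
      have := Finset.card_le_univ S'
      omega

lemma enum (A : Finset V) (a : V) (ha : a ∈ A) : ∃ f : V → ℕ, Set.InjOn f A ∧
    (∀ x ∈ A, 1 ≤ f x ∧ f x ≤ A.card) ∧ (∀ j, 1 ≤ j → j ≤ A.card → ∃ x ∈ A, f x = j) ∧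
    f a = 1 := by
  have hpos : 0 < A.card := Finset.card_pos.2 ⟨a, ha⟩
  let e : A ≃ Fin A.card := A.equivFin.trans (Equiv.swap (A.equivFin ⟨a, ha⟩) ⟨0, hpos⟩)
  refine ⟨fun x => if h : x ∈ A then (e ⟨x, h⟩).val + 1 else 0, ?_, ?_, ?_, ?_⟩
  · intro x hx y hy hxy
    have hx' : x ∈ A := hx
    have hy' : y ∈ A := hy
    simp only [hx', hy', dif_pos] at hxy
    have h1 : e ⟨x, hx'⟩ = e ⟨y, hy'⟩ := Fin.ext (by omega)
    have := e.injective h1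
    simpa using this
  · intro x hx
    have := (e ⟨x, hx⟩).isLt
    simp only [hx, dif_pos]
    omega
  · intro j h1 h2
    refine ⟨e.symm ⟨j - 1, by omega⟩, (e.symm ⟨j - 1, by omega⟩).2, ?_⟩
    simp only [Finset.coe_mem, dif_pos, Subtype.coe_eta, Equiv.apply_symm_apply]
    omega
  · simp [ha, e]

lemma card_levels (L : V → ℕ) (v : V) (h0 : ∀ x, L x = 0 ↔ x = v) (i : ℕ) :
    (Finset.univ.filter fun z => L z ≤ i).card
      = (∑ k ∈ Finset.Icc 1 i, (Finset.univ.filter fun z => L z = k).card) + 1 := by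
  induction i with
  | zero => simp [h0, Finset.filter_eq']
  | succ i ih =>
    rw [Finset.sum_Icc_succ_top (by omega)]
    have : (Finset.univ.filter fun z => L z ≤ i + 1)
        = (Finset.univ.filter fun z => L z ≤ i) ∪ (Finset.univ.filter fun z => L z = i + 1) := by
      ext z
      simp only [Finset.mem_filter, Finset.mem_univ, true_and, Finset.mem_union]
      omega
    rw [this, Finset.card_union_of_disjoint, ih]
    · ring
    · refine Finset.disjoint_left.2 fun z hz hz2 => ?_
      simp only [Finset.mem_filter, Finset.mem_univ, true_and] at hz hz2
      omega

lemma conclude {G : Multigraph V} {v : V} {m : ℕ} {L : V → ℕ} {c : ℕ → V} {T : Finset V}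
    (I : LInv G v m L c Finset.univ T) :
    ∃ (m : ℕ) (q : ℕ → ℕ) (ℓ : V → ℕ × ℕ), G.IsQBLabelling m q ℓ ∧ ℓ v = (0, 1) := by
  classical
  have hLm : ∀ x, L x ≤ m := fun x => (I.memS x).1 (Finset.mem_univ x)
  obtain ⟨t, ht⟩ := I.inv.ne
  have hc : ∀ i, ∃ a, i ≤ m → L a = i ∧ (i < m → a = c i) := by
    intro i
    by_cases h : i < m
    · exact ⟨c i, fun _ => ⟨I.cL i h, fun _ => rfl⟩⟩
    · exact ⟨t, fun h' => ⟨by rw [(I.memT t).1 ht]; omega, fun h2 => absurd h2 h⟩⟩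
  choose d hd using hc
  have hf : ∀ i, ∃ f : V → ℕ, i ≤ m →
      Set.InjOn f (Finset.univ.filter fun z => L z = i : Finset V) ∧
      (∀ x ∈ (Finset.univ.filter fun z => L z = i),
        1 ≤ f x ∧ f x ≤ (Finset.univ.filter fun z => L z = i).card) ∧
      (∀ j, 1 ≤ j → j ≤ (Finset.univ.filter fun z => L z = i).card →
        ∃ x ∈ (Finset.univ.filter fun z => L z = i), f x = j) ∧ f (d i) = 1 := by
    intro i
    by_cases h : i ≤ m
    · obtain ⟨f, hf⟩ := enum (Finset.univ.filter fun z => L z = i) (d i)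
        (by simp [(hd i h).1])
      exact ⟨f, fun _ => hf⟩
    · exact ⟨fun _ => 0, fun h' => absurd h' h⟩
  choose f hf using hf
  have hmem : ∀ x, x ∈ (Finset.univ.filter fun z => L z = L x) := fun x => by simp
  set q : ℕ → ℕ := fun i => (Finset.univ.filter fun z => L z = i).card with hq
  have hq0 : ∀ i, qbSize q i = q i := by
    intro i
    unfold qbSize
    split_ifs with h
    · subst h
      simp [hq, I.L0, Finset.filter_eq']
    · rfl
  have hinj : ∀ x y, L x = L y → f (L x) x = f (L y) y → x = y := by
    intro x y h1 h2
    rw [← h1] at h2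
    exact (hf (L x) (hLm x)).1 (by simp) (by simp [h1]) h2
  have hfirst : ∀ x, L x < m → (f (L x) x = 1 ↔ x = c (L x)) := by
    intro x hx
    have h1 := (hd (L x) (hLm x))
    have h2 := (hf (L x) (hLm x)).2.2.2
    constructor
    · intro h
      rw [← h1.2 hx]
      refine hinj _ _ h1.1.symm ?_
      rw [h, h1.1, h2]
    · intro h
      rw [h1.2 hx, ← h] at h2
      exact h2
  have hmul : ∀ x y, x ≠ y → L x ≤ L y → G.mult x y = if L x = L y then 1
      else if L x + 1 = L y ∧ f (L x) x = 1 then (∑ i ∈ Finset.Icc 1 (L x), q i) + 2 else 0 := by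
    intro x y hxy hle
    rw [I.mul x y hxy (Finset.mem_univ _) (Finset.mem_univ _) hle, card_levels L v I.L0]
    by_cases h : L x + 1 = L y
    · have h2 : L x < m := by have := hLm y; omega
      simp only [hfirst x h2]
      split_ifs <;> rfl
    · simp only [h, false_and, if_false]
  refine ⟨m, q, fun x => (L x, f (L x) x), ⟨?_, ?_, ?_, ?_, ?_⟩, ?_⟩
  · intro i _ h
    exact Finset.card_pos.2 ⟨d i, by simp [(hd i h).1]⟩
  · intro x y h
    simp only [Prod.mk.injEq] at h
    exact hinj x y h.1 h.2
  · intro x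
    refine ⟨hLm x, ?_⟩
    simp only [hq0]
    exact (hf (L x) (hLm x)).2.1 x (hmem x)
  · intro i j hi h1 h2
    rw [hq0] at h2
    obtain ⟨x, hx, hxj⟩ := (hf i hi).2.2.1 j h1 h2
    have hx' : L x = i := by simpa using hx
    refine ⟨x, ?_⟩
    simp only [hx', hxj]
  · intro x y hxy
    simp only
    rcases le_total (L x) (L y) with h | h
    · rw [hmul x y hxy h]
      have h2 : ¬ (L y + 1 = L x) := by omega
      simp only [h2, false_and, if_false]
    · rw [G.symm, hmul y x hxy.symm h]
      have h2 : ¬ (L x + 1 = L y) := by omega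
      simp only [h2, false_and, if_false, eq_comm (a := L y) (b := L x)]
  · have h0 : L v = 0 := (I.L0 v).2 rfl
    have h1 : d 0 = v := (I.L0 _).1 (hd 0 (by omega)).1
    have h2 := (hf 0 (by omega)).2.2.2
    rw [h1] at h2
    simp only [h0, h2]

end QBProof

/-- If `G` is a gonality-tight graph with a vertex `v` such that the
divisor `v + ∑_{w ∈ V(G)} w` realises the second gonality, then `G` is a quasi-banana graph
with `v` as the vertex `u_{0,1}`. -/
theorem stmt10 (G : Multigraph V) (hG : G.Connected) (hGT : G.GonalityTight)
    (v : V) (hreal : G.Realises 2 (fun w => (if w = v then 1 else 0) + 1)) :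
    ∃ (m : ℕ) (q : ℕ → ℕ) (ℓ : V → ℕ × ℕ),
      G.IsQBLabelling m q ℓ ∧ ℓ v = (0, 1) := by
  obtain ⟨m, L, c, T, I⟩ := QBProof.LInv_final (QBProof.mkHyp G hG hGT v hreal) _
    (QBProof.LInv_base G v) le_rfl
  exact QBProof.conclude I
end

section
/- Let G' be a graph with a vertex v, let k ≥ 0 and n ≥ 1 be integers, and let G be the graph obtained from G' by attaching a complete graph K_n: add n new vertices pairwise joined by exactly one edge, and join v to each of the n new vertices by exactly k+1 edges. Let D_2 = (k+1)·v + Σ_{w∈V(K_n)} w. Then: (1) for every vertex u of K_n, D_2 is linearly equivalent on G to (k+n+1)·u; (2) (k+1)·D_2 is linearly equivalent on G to (k+n+1)(k+1)·v. -/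
open Finset

variable {V : Type*} [Fintype V] [DecidableEq V]

/-- For `G` obtained from `G'` by attaching `K_n` to `v` along `k+1`
edges, and `D₂ = (k+1)·v + ∑_{w ∈ K_n} w`: (1) `D₂ ∼ (k+n+1)·u` for every `u ∈ K_n`;
(2) `(k+1)·D₂ ∼ (k+n+1)(k+1)·v`. -/
theorem stmt12 (G' : Multigraph V) (hG' : G'.Connected)
    (v : V) (k n : ℕ) (hn : 1 ≤ n) :
    (∀ u : Fin n,
      (attachComplete G' v k n).LinEquiv
        (Sum.elim (fun a => if a = v then (k : ℤ) + 1 else 0) (fun _ => (1 : ℤ)))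
        (fun w => if w = Sum.inr u then (k : ℤ) + n + 1 else 0)) ∧
    (attachComplete G' v k n).LinEquiv
      (fun w => ((k : ℤ) + 1) *
        Sum.elim (fun a => if a = v then (k : ℤ) + 1 else 0) (fun _ => (1 : ℤ)) w)
      (fun w => if w = Sum.inl v then ((k : ℤ) + n + 1) * ((k : ℤ) + 1) else 0) := by
  constructor
  · intro u
    refine ⟨Sum.elim (fun _ => 0) (fun i => if i = u then -1 else 0), ?_⟩
    funext w
    rcases w with a | i
    · by_cases h : a = v <;>
        simp [Multigraph.laplacian, attachComplete, Fintype.sum_sum_type, h]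
    · by_cases h : i = u
      · subst h
        have key : ∀ x : Fin n, ((if i = x then (0 : ℤ) else 1) * (-1 - if x = i then -1 else 0))
            = (if i = x then 1 else 0) - 1 := by
          intro x
          by_cases hx : i = x
          · simp [hx]
          · simp [hx, Ne.symm hx]
        simp [Multigraph.laplacian, attachComplete, Fintype.sum_sum_type, key]
        ring
      · have key : ∀ x : Fin n, ((if i = x then (0 : ℤ) else 1) * (0 - if x = u then -1 else 0))
            = (if x = u then 1 else 0) := by
          intro x
          by_cases hx : x = u
          · subst hx
            simp [h]
          · simp [hx]
        simp only [zero_sub] at key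
        simp [Multigraph.laplacian, attachComplete, Fintype.sum_sum_type, h, key]
  · refine ⟨Sum.elim (fun _ => 0) (fun _ => 1), ?_⟩
    funext w
    rcases w with a | i
    · by_cases h : a = v <;>
        simp [Multigraph.laplacian, attachComplete, Fintype.sum_sum_type, h]
      ring
    · simp [Multigraph.laplacian, attachComplete, Fintype.sum_sum_type]
end
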